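/- For all integers k ≥ 2 and s ≥ 1 there is a constant c(k,s) such that the following holds. Let P be a set of m points in ℝ² and let C be a set of n bounded-degree algebraic curves in ℝ² that have k degrees of freedom with multiplicity s. Then I(P,C) ≤ c(k,s)·(m^{k/(2k-1)}·n^{(2k-2)/(2k-1)} + m + n), where the constant also depends on the bound on the degree of the curves. -/

import Mathlib

attribute [local instance] Classical.propDecidable

noncomputable section

/-- The number of incidences between a finite set of points and a finite set of
curves (subsets of `ℝ^d`): the number of pairs `(p, γ)` with `p ∈ γ`. -/
def Incidences {d : ℕ} (P : Finset (Fin d → ℝ)) (C : Finset (Set (Fin d → ℝ))) : ℕ :=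
  ((P ×ˢ C).filter fun pc => pc.1 ∈ pc.2).card

/-- A line in `ℝ^d`. -/
def IsLine {d : ℕ} (ℓ : Set (Fin d → ℝ)) : Prop :=
  ∃ a b : Fin d → ℝ, b ≠ 0 ∧ ℓ = {x | ∃ t : ℝ, x = a + t • b}

/-- The real zero set of a polynomial in `d` variables. -/
def zeroSet {d : ℕ} (f : MvPolynomial (Fin d) ℝ) : Set (Fin d → ℝ) :=
  {x | MvPolynomial.eval x f = 0}

/-- A real algebraic set in `ℝ^d`. -/
def IsAlgSet {d : ℕ} (V : Set (Fin d → ℝ)) : Prop :=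
  ∃ S : Set (MvPolynomial (Fin d) ℝ),
    V = {x | ∀ f ∈ S, MvPolynomial.eval x f = 0}

/-- A real algebraic set in `ℝ^d` cut out by polynomials of degree at most `E`. -/
def IsAlgSetDeg {d : ℕ} (E : ℕ) (V : Set (Fin d → ℝ)) : Prop :=
  ∃ S : Set (MvPolynomial (Fin d) ℝ), (∀ f ∈ S, f.totalDegree ≤ E) ∧
    V = {x | ∀ f ∈ S, MvPolynomial.eval x f = 0}

/-- An irreducible real algebraic set: a nonempty algebraic set that is not the
union of two proper algebraic subsets. -/
def IsIrredAlgSet {d : ℕ} (V : Set (Fin d → ℝ)) : Prop :=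
  IsAlgSet V ∧ V.Nonempty ∧
    ∀ V₁ V₂ : Set (Fin d → ℝ), IsAlgSet V₁ → IsAlgSet V₂ → V = V₁ ∪ V₂ →
      V = V₁ ∨ V = V₂

/-- The real algebraic set `V` has dimension at least `j`: there is a strictly
increasing chain of `j+1` irreducible algebraic sets contained in `V`. -/
def AlgDimGE {d : ℕ} (j : ℕ) (V : Set (Fin d → ℝ)) : Prop :=
  ∃ W : Fin (j + 1) → Set (Fin d → ℝ),
    (∀ i, IsIrredAlgSet (W i)) ∧
    (∀ i i' : Fin (j + 1), i < i' → W i ⊂ W i') ∧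
    W (Fin.last j) ⊆ V

/-- The real algebraic set `V` has dimension exactly `j`. -/
def HasAlgDim {d : ℕ} (j : ℕ) (V : Set (Fin d → ℝ)) : Prop :=
  AlgDimGE j V ∧ ¬ AlgDimGE (j + 1) V

/-- An irreducible algebraic curve of degree at most `E` in `ℝ^d`: an irreducible
real algebraic set of dimension one, cut out by polynomials of degree at most `E`. -/
def IsIrredCurve {d : ℕ} (E : ℕ) (γ : Set (Fin d → ℝ)) : Prop :=
  IsAlgSetDeg E γ ∧ IsIrredAlgSet γ ∧ HasAlgDim 1 γ

/-- A finite family `C` of curves has `k` degrees of freedom with multiplicity `s`: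
(i) for every `k` distinct points, at most `s` curves of `C` pass through all of
them, and (ii) any two distinct curves of `C` intersect in at most `s` points. -/
def HasDegreesOfFreedom {d : ℕ} (C : Finset (Set (Fin d → ℝ))) (k s : ℕ) : Prop :=
  (∀ pts : Finset (Fin d → ℝ), pts.card = k →
      (C.filter fun γ => ∀ p ∈ pts, p ∈ γ).card ≤ s) ∧
  ∀ γ₁ ∈ C, ∀ γ₂ ∈ C, γ₁ ≠ γ₂ → (γ₁ ∩ γ₂).Finite ∧ (γ₁ ∩ γ₂).ncard ≤ s

/-- An algebraic curve of degree at most `E` in the plane: the zero set of a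
nonzero bivariate real polynomial of degree at most `E`. -/
def IsPlaneAlgCurve (E : ℕ) (γ : Set (Fin 2 → ℝ)) : Prop :=
  ∃ f : MvPolynomial (Fin 2) ℝ, f ≠ 0 ∧ f.totalDegree ≤ E ∧ γ = zeroSet f


lemma ps_sampling_S {J α : Type*} (T : Finset J → Finset (Finset α))
    (inc : J → α → Prop) (w : Finset α → ℕ) (W r : ℕ) (S : Finset J) (hS : S.card = r + 1)
    (h1 : ∀ R ⊆ S, ∀ Δ ∈ T R, ∀ a ∈ R, ∀ p ∈ Δ, ¬ inc a p)
    (h2 : ∀ R ⊆ S, ∀ Δ ∈ T R, ∃ D ⊆ R, D.card ≤ 4 ∧ ∀ R', D ⊆ R' → R' ⊆ R → Δ ∈ T R')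
    (h3 : ∀ R ⊆ S, ∑ Δ ∈ T R, w Δ ≤ W) :
    ∑ γ ∈ S, ∑ Δ ∈ (T (S.erase γ)).filter (fun Δ => ∃ p ∈ Δ, inc γ p), w Δ ≤ 32 * W := by
  have key : ∀ γ ∈ S, ∀ Δ ∈ (T (S.erase γ)).filter (fun Δ => ∃ p ∈ Δ, inc γ p),
      2 ^ r ≤ 16 * (S.powerset.filter (fun R' => Δ ∈ T R')).card := by
    intro γ hγ Δ hΔ
    rw [Finset.mem_filter] at hΔ
    obtain ⟨D, hD, hDc, hDR⟩ := h2 _ (Finset.erase_subset _ _) Δ hΔ.1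
    have hsub : (Finset.Icc D (S.erase γ)) ⊆ S.powerset.filter (fun R' => Δ ∈ T R') := by
      intro R' hR'
      rw [Finset.mem_Icc] at hR'
      rw [Finset.mem_filter, Finset.mem_powerset]
      exact ⟨hR'.2.trans (Finset.erase_subset _ _), hDR R' hR'.1 hR'.2⟩
    have hc := Finset.card_le_card hsub
    rw [Finset.card_Icc_finset hD, Finset.card_erase_of_mem hγ, hS] at hc
    have hDr : D.card ≤ r := by
      have := Finset.card_le_card hD
      rw [Finset.card_erase_of_mem hγ, hS] at this
      simpa using this
    calc 2 ^ r = 2 ^ D.card * 2 ^ (r - D.card) := by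
            rw [← pow_add]; congr 1; omega
      _ ≤ 2 ^ 4 * 2 ^ (r - D.card) := by
            gcongr; norm_num
      _ ≤ 16 * (S.powerset.filter (fun R' => Δ ∈ T R')).card := by
            norm_num; simpa using hc
  have h4 : 2 ^ r * ∑ γ ∈ S, ∑ Δ ∈ (T (S.erase γ)).filter (fun Δ => ∃ p ∈ Δ, inc γ p), w Δ
      ≤ 16 * ∑ R' ∈ S.powerset, ∑ Δ ∈ T R', w Δ := by
    calc 2 ^ r * ∑ γ ∈ S, ∑ Δ ∈ (T (S.erase γ)).filter (fun Δ => ∃ p ∈ Δ, inc γ p), w Δ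
        ≤ ∑ γ ∈ S, ∑ Δ ∈ (T (S.erase γ)).filter (fun Δ => ∃ p ∈ Δ, inc γ p),
            16 * ∑ R' ∈ S.powerset, if Δ ∈ T R' then w Δ else 0 := by
          rw [Finset.mul_sum]
          refine Finset.sum_le_sum fun γ hγ => ?_
          rw [Finset.mul_sum]
          refine Finset.sum_le_sum fun Δ hΔ => ?_
          rw [← Finset.sum_filter, Finset.sum_const, smul_eq_mul, ← mul_assoc]
          exact Nat.mul_le_mul_right _ (key γ hγ Δ hΔ)
      _ = 16 * ∑ R' ∈ S.powerset, ∑ γ ∈ S,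
            ∑ Δ ∈ (T (S.erase γ)).filter (fun Δ => ∃ p ∈ Δ, inc γ p),
              if Δ ∈ T R' then w Δ else 0 := by
          simp_rw [← Finset.mul_sum]
          congr 1
          rw [Finset.sum_comm]
          refine Finset.sum_congr rfl fun γ hγ => ?_
          rw [Finset.sum_comm]
      _ ≤ 16 * ∑ R' ∈ S.powerset, ∑ Δ ∈ T R', w Δ := by
          gcongr with R' hR'
          have : ∀ γ ∈ S, ∑ Δ ∈ (T (S.erase γ)).filter (fun Δ => ∃ p ∈ Δ, inc γ p),
              (if Δ ∈ T R' then w Δ else 0) =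
              ∑ Δ ∈ T R', if (Δ ∈ T (S.erase γ) ∧ ∃ p ∈ Δ, inc γ p) then w Δ else 0 := by
            intro γ hγ
            rw [← Finset.sum_filter, ← Finset.sum_filter]
            refine Finset.sum_congr ?_ fun _ _ => rfl
            ext Δ
            simp only [Finset.mem_filter]
            tauto
          rw [Finset.sum_congr rfl this, Finset.sum_comm]
          refine Finset.sum_le_sum fun Δ hΔ => ?_
          rw [← Finset.sum_filter, Finset.sum_const, smul_eq_mul]
          have : (S.filter (fun γ => Δ ∈ T (S.erase γ) ∧ ∃ p ∈ Δ, inc γ p)).card ≤ 1 := by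
            rw [Finset.card_le_one]
            intro a ha b hb
            rw [Finset.mem_filter] at ha hb
            by_contra hab
            obtain ⟨p, hp, hpi⟩ := hb.2.2
            exact h1 _ (Finset.erase_subset _ _) Δ ha.2.1 b
              (Finset.mem_erase.2 ⟨fun h => hab h.symm, hb.1⟩) p hp hpi
          calc _ ≤ 1 * w Δ := Nat.mul_le_mul_right _ this
            _ = w Δ := one_mul _
  have h5 : ∑ R' ∈ S.powerset, ∑ Δ ∈ T R', w Δ ≤ 2 ^ (r + 1) * W := by
    calc _ ≤ ∑ R' ∈ S.powerset, W :=
          Finset.sum_le_sum fun R' hR' => h3 R' (Finset.mem_powerset.1 hR')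
      _ = _ := by rw [Finset.sum_const, Finset.card_powerset, hS, smul_eq_mul]
  have h6 := h4.trans (Nat.mul_le_mul_left 16 h5)
  rw [pow_succ] at h6
  refine Nat.le_of_mul_le_mul_left (h6.trans (le_of_eq (by ring))) (pow_pos two_pos r)

lemma ps_sampling {J α : Type*} (A : Finset J) (T : Finset J → Finset (Finset α))
    (inc : J → α → Prop) (w : Finset α → ℕ) (W r : ℕ)
    (h1 : ∀ R ⊆ A, ∀ Δ ∈ T R, ∀ a ∈ R, ∀ p ∈ Δ, ¬ inc a p)
    (h2 : ∀ R ⊆ A, ∀ Δ ∈ T R, ∃ D ⊆ R, D.card ≤ 4 ∧ ∀ R', D ⊆ R' → R' ⊆ R → Δ ∈ T R')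
    (h3 : ∀ R ⊆ A, R.card ≤ r + 1 → ∑ Δ ∈ T R, w Δ ≤ W)
    (hr : r < A.card) :
    ∃ R ⊆ A, R.card = r ∧
      (∑ Δ ∈ T R, w Δ * (A.filter (fun a => ∃ p ∈ Δ, inc a p)).card) * (r + 1)
        ≤ 32 * W * A.card := by
  set g : Finset J → J → ℕ := fun R γ =>
    ∑ Δ ∈ (T R).filter (fun Δ => ∃ p ∈ Δ, inc γ p), w Δ with hg
  have e1 : ∀ R ∈ A.powersetCard r,
      ∑ Δ ∈ T R, w Δ * (A.filter (fun a => ∃ p ∈ Δ, inc a p)).card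
        = ∑ γ ∈ A \ R, g R γ := by
    intro R hR
    rw [Finset.mem_powersetCard] at hR
    simp only [hg]
    have : ∀ γ ∈ A \ R, ∑ Δ ∈ (T R).filter (fun Δ => ∃ p ∈ Δ, inc γ p), w Δ
        = ∑ Δ ∈ T R, if (∃ p ∈ Δ, inc γ p) then w Δ else 0 := by
      intro γ _; rw [Finset.sum_filter]
    rw [Finset.sum_congr rfl this, Finset.sum_comm]
    refine Finset.sum_congr rfl fun Δ hΔ => ?_
    rw [← Finset.sum_filter, Finset.sum_const, smul_eq_mul, mul_comm]
    congr 2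
    ext a
    simp only [Finset.mem_filter, Finset.mem_sdiff]
    constructor
    · rintro ⟨ha, p, hp, hi⟩
      exact ⟨⟨ha, fun haR => h1 R hR.1 Δ hΔ a haR p hp hi⟩, p, hp, hi⟩
    · rintro ⟨ha, h⟩; exact ⟨ha.1, h⟩
  have e2 : ∀ g : Finset J → J → ℕ, ∑ R ∈ A.powersetCard r, ∑ γ ∈ A \ R, g R γ
      = ∑ S ∈ A.powersetCard (r + 1), ∑ γ ∈ S, g (S.erase γ) γ := by
    intro g
    rw [Finset.sum_sigma', Finset.sum_sigma']
    refine Finset.sum_nbij' (fun x => ⟨insert x.2 x.1, x.2⟩) (fun x => ⟨x.1.erase x.2, x.2⟩)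
      ?_ ?_ ?_ ?_ ?_
    · rintro ⟨R, γ⟩ h
      simp only [Finset.mem_sigma, Finset.mem_powersetCard, Finset.mem_sdiff] at h ⊢
      refine ⟨⟨Finset.insert_subset h.2.1 h.1.1, ?_⟩, Finset.mem_insert_self _ _⟩
      rw [Finset.card_insert_of_notMem h.2.2, h.1.2]
    · rintro ⟨S, γ⟩ h
      simp only [Finset.mem_sigma, Finset.mem_powersetCard, Finset.mem_sdiff] at h ⊢
      refine ⟨⟨(Finset.erase_subset _ _).trans h.1.1, ?_⟩, h.1.1 h.2, Finset.notMem_erase _ _⟩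
      rw [Finset.card_erase_of_mem h.2, h.1.2]; rfl
    · rintro ⟨R, γ⟩ h
      simp only [Finset.mem_sigma, Finset.mem_powersetCard, Finset.mem_sdiff] at h
      simp [Finset.erase_insert h.2.2]
    · rintro ⟨S, γ⟩ h
      simp only [Finset.mem_sigma, Finset.mem_powersetCard] at h
      simp [Finset.insert_erase h.2]
    · rintro ⟨R, γ⟩ h
      simp only [Finset.mem_sigma, Finset.mem_powersetCard, Finset.mem_sdiff] at h
      simp [Finset.erase_insert h.2.2]
  have e3 : ∑ S ∈ A.powersetCard (r + 1), ∑ γ ∈ S, g (S.erase γ) γ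
      ≤ (A.card.choose (r + 1)) * (32 * W) := by
    rw [← Finset.card_powersetCard, ← smul_eq_mul]
    refine Finset.sum_le_card_nsmul _ _ _ fun S hS => ?_
    rw [Finset.mem_powersetCard] at hS
    exact ps_sampling_S T inc w W r S hS.2 (fun R hR => h1 R (hR.trans hS.1))
      (fun R hR => h2 R (hR.trans hS.1))
      (fun R hR => h3 R (hR.trans hS.1) (hS.2 ▸ Finset.card_le_card hR))
  have hne : (A.powersetCard r).Nonempty := Finset.powersetCard_nonempty.2 hr.le
  have e4 : ∑ R ∈ A.powersetCard r,
      (∑ Δ ∈ T R, w Δ * (A.filter (fun a => ∃ p ∈ Δ, inc a p)).card) * (r + 1)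
      ≤ ∑ R ∈ A.powersetCard r, 32 * W * A.card := by
    rw [← Finset.sum_mul, Finset.sum_congr rfl e1, e2 g, Finset.sum_const,
      Finset.card_powersetCard, smul_eq_mul]
    calc _ ≤ (A.card.choose (r + 1)) * (32 * W) * (r + 1) := Nat.mul_le_mul_right _ e3
      _ = (A.card.choose (r + 1) * (r + 1)) * (32 * W) := by ring
      _ = (A.card.choose r * (A.card - r)) * (32 * W) := by rw [Nat.choose_succ_right_eq]
      _ ≤ (A.card.choose r * A.card) * (32 * W) := by gcongr; omega
      _ = _ := by ring
  obtain ⟨R, hR, hle⟩ := Finset.exists_le_of_sum_le hne e4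
  rw [Finset.mem_powersetCard] at hR
  exact ⟨R, hR.1, hR.2, hle⟩


section
open Filter Topology

/-- An `x`-monotone arc over the open interval `(l, u)`. -/
structure PSArc where
  l : EReal
  u : EReal
  φ : ℝ → EReal
  cont : ∀ x : ℝ, l < x → (x : EReal) < u → ContinuousAt φ x

def PSArc.Dom (a : PSArc) (x : ℝ) : Prop := a.l < x ∧ (x : EReal) < a.u

lemma PSArc.Dom.eventually {a : PSArc} {x : ℝ} (h : a.Dom x) : ∀ᶠ z in 𝓝 x, a.Dom z := by
  have h1 : ∀ᶠ z : ℝ in 𝓝 x, a.l < z :=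
    (continuous_coe_real_ereal.tendsto x).eventually (lt_mem_nhds h.1)
  have h2 : ∀ᶠ z : ℝ in 𝓝 x, (z : EReal) < a.u :=
    (continuous_coe_real_ereal.tendsto x).eventually (gt_mem_nhds h.2)
  exact h1.and h2

lemma PSArc.not_dom_eventually {a : PSArc} {x : ℝ} (h : ¬ a.Dom x) (hl : (x : EReal) ≠ a.l)
    (hu : (x : EReal) ≠ a.u) : ∀ᶠ z in 𝓝 x, ¬ a.Dom z := by
  by_cases h1 : a.l < x
  · have h2 : a.u < x := lt_of_le_of_ne (not_lt.1 fun h2 => h ⟨h1, h2⟩) hu.symm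
    have : ∀ᶠ z : ℝ in 𝓝 x, a.u < z :=
      (continuous_coe_real_ereal.tendsto x).eventually (lt_mem_nhds h2)
    exact this.mono fun z hz hd => absurd hd.2 hz.not_gt
  · have h2 : (x : EReal) < a.l := lt_of_le_of_ne (not_lt.1 h1) hl
    have : ∀ᶠ z : ℝ in 𝓝 x, (z : EReal) < a.l :=
      (continuous_coe_real_ereal.tendsto x).eventually (gt_mem_nhds h2)
    exact this.mono fun z hz hd => absurd hd.1 hz.not_gt

section
variable {J : Type*} (F : J → PSArc)

def PSOn (c : J) (p : Fin 2 → ℝ) : Prop := (F c).Dom (p 0) ∧ (F c).φ (p 0) = (p 1 : ℝ)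

def PSOff (R : Finset J) (p : Fin 2 → ℝ) : Prop := ∀ c ∈ R, ¬ PSOn F c p

def PSValid (R : Finset J) (α β : J) (x : ℝ) : Prop :=
  (F α).Dom x ∧ (F β).Dom x ∧ (F α).φ x < (F β).φ x ∧
    ∀ c ∈ R, c ≠ α → c ≠ β → (F c).Dom x → (F c).φ x < (F α).φ x ∨ (F β).φ x < (F c).φ x

def PSBtw (α β : J) (p : Fin 2 → ℝ) : Prop :=
  (F α).φ (p 0) < (p 1 : ℝ) ∧ ((p 1 : ℝ) : EReal) < (F β).φ (p 0)

def PSVert (R : Finset J) (p q : Fin 2 → ℝ) : Prop :=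
  p 0 = q 0 ∧ ∀ c ∈ R, (F c).Dom (p 0) →
    ((F c).φ (p 0) < (p 1 : ℝ) ∧ (F c).φ (p 0) < (q 1 : ℝ)) ∨
    (((p 1 : ℝ) : EReal) < (F c).φ (p 0) ∧ ((q 1 : ℝ) : EReal) < (F c).φ (p 0))

def PSRel (R : Finset J) (p q : Fin 2 → ℝ) : Prop :=
  PSVert F R p q ∨
  ∃ α ∈ R, ∃ β ∈ R, PSBtw F α β p ∧ PSBtw F α β q ∧ ∀ x ∈ Set.uIcc (p 0) (q 0), PSValid F R α β x

variable {F}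

lemma PSValid.mono {R R' : Finset J} {α β : J} {x : ℝ} (h : PSValid F R α β x) (hR : R' ⊆ R) :
    PSValid F R' α β x :=
  ⟨h.1, h.2.1, h.2.2.1, fun c hc => h.2.2.2 c (hR hc)⟩

lemma PSValid.right_unique {R : Finset J} {α β β' : J} {x : ℝ} (h : PSValid F R α β x)
    (h' : PSValid F R α β' x) (hβ : β ∈ R) (hβ' : β' ∈ R) : β = β' := by
  by_contra hne
  have a1 : β' ≠ α := fun e => by have := h'.2.2.1; rw [e] at this; exact lt_irrefl _ this
  have a2 : β ≠ α := fun e => by have := h.2.2.1; rw [e] at this; exact lt_irrefl _ this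
  have b1 := h.2.2.2 β' hβ' a1 (Ne.symm hne) h'.2.1
  have b2 := h'.2.2.2 β hβ a2 hne h.2.1
  have c1 := h.2.2.1
  have c2 := h'.2.2.1
  rcases b1 with b1 | b1
  · exact lt_asymm b1 c2
  · rcases b2 with b2 | b2
    · exact lt_asymm b2 c1
    · exact lt_asymm b1 b2

lemma PSValid.left_unique {R : Finset J} {α α' β : J} {x : ℝ} (h : PSValid F R α β x)
    (h' : PSValid F R α' β x) (hα : α ∈ R) (hα' : α' ∈ R) : α = α' := by
  by_contra hne
  have a1 : α' ≠ β := fun e => by have := h'.2.2.1; rw [e] at this; exact lt_irrefl _ this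
  have a2 : α ≠ β := fun e => by have := h.2.2.1; rw [e] at this; exact lt_irrefl _ this
  have b1 := h.2.2.2 α' hα' (Ne.symm hne) a1 h'.1
  have b2 := h'.2.2.2 α hα hne a2 h.1
  have c1 := h.2.2.1
  have c2 := h'.2.2.1
  rcases b1 with b1 | b1
  · rcases b2 with b2 | b2
    · exact lt_asymm b1 b2
    · exact lt_asymm b2 c1
  · exact lt_asymm b1 c2

/-- Two valid gaps around the same point coincide. -/
lemma PSValid.unique {R : Finset J} {α β α' β' : J} {p : Fin 2 → ℝ}
    (h : PSValid F R α β (p 0)) (h' : PSValid F R α' β' (p 0))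
    (hp : PSBtw F α β p) (hp' : PSBtw F α' β' p)
    (hα : α ∈ R) (hβ : β ∈ R) (hα' : α' ∈ R) (hβ' : β' ∈ R) : α = α' ∧ β = β' := by
  have e : α = α' := by
    by_contra hne
    have a1 : α' ≠ β := fun e => by
      have := hp'.1; rw [e] at this; exact lt_asymm this hp.2
    have a2 : α ≠ β' := fun e => by
      have := hp.1; rw [e] at this; exact lt_asymm this hp'.2
    have b1 := h.2.2.2 α' hα' (Ne.symm hne) a1 h'.1
    have b2 := h'.2.2.2 α hα hne a2 h.1
    rcases b1 with b1 | b1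
    · rcases b2 with b2 | b2
      · exact lt_asymm b1 b2
      · exact lt_asymm b2 (hp.1.trans hp'.2)
    · exact lt_asymm b1 (hp'.1.trans hp.2)
  subst e
  exact ⟨rfl, h.right_unique h' hβ hβ'⟩

lemma PSVert.symm {R : Finset J} {p q : Fin 2 → ℝ} (h : PSVert F R p q) : PSVert F R q p := by
  refine ⟨h.1.symm, fun c hc hd => ?_⟩
  rw [← h.1] at hd ⊢
  have := h.2 c hc hd
  tauto

lemma PSRel.symm {R : Finset J} {p q : Fin 2 → ℝ} (h : PSRel F R p q) : PSRel F R q p := by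
  rcases h with h | ⟨α, hα, β, hβ, h1, h2, h3⟩
  · exact Or.inl h.symm
  · exact Or.inr ⟨α, hα, β, hβ, h2, h1, by rwa [Set.uIcc_comm]⟩

lemma PSRel.refl {R : Finset J} {p : Fin 2 → ℝ} (h : PSOff F R p) : PSRel F R p p := by
  refine Or.inl ⟨rfl, fun c hc hd => ?_⟩
  rcases lt_trichotomy ((F c).φ (p 0)) (p 1 : ℝ) with h1 | h1 | h1
  · exact Or.inl ⟨h1, h1⟩
  · exact absurd ⟨hd, h1⟩ (h c hc)
  · exact Or.inr ⟨h1, h1⟩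

lemma PSRel.off {R : Finset J} {p q : Fin 2 → ℝ} (h : PSRel F R p q) : PSOff F R p := by
  intro c hc hon
  rcases h with h | ⟨α, hα, β, hβ, h1, h2, h3⟩
  · rcases h.2 c hc hon.1 with h | h
    · exact h.1.ne hon.2
    · exact h.1.ne' hon.2
  · have hv := h3 (p 0) Set.left_mem_uIcc
    by_cases e1 : c = α
    · subst e1; exact h1.1.ne hon.2
    by_cases e2 : c = β
    · subst e2; exact h1.2.ne' hon.2
    rcases hv.2.2.2 c hc e1 e2 hon.1 with h | h
    · rw [hon.2] at h; exact lt_asymm h h1.1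
    · rw [hon.2] at h; exact lt_asymm h h1.2

/-- For a point in a valid gap, the relation is given by that gap. -/
lemma psRel_iff_of_valid {R : Finset J} {α β : J} {p : Fin 2 → ℝ} (hα : α ∈ R) (hβ : β ∈ R)
    (hp : PSBtw F α β p) (hv : PSValid F R α β (p 0)) (q : Fin 2 → ℝ) :
    PSRel F R p q ↔ PSBtw F α β q ∧ ∀ x ∈ Set.uIcc (p 0) (q 0), PSValid F R α β x := by
  constructor
  · rintro (h | ⟨α', hα', β', hβ', h1, h2, h3⟩)
    · refine ⟨⟨?_, ?_⟩, ?_⟩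
      · rw [← h.1]
        rcases h.2 α hα hv.1 with h | h
        · exact h.2
        · exact absurd h.1 hp.1.not_gt
      · rw [← h.1]
        rcases h.2 β hβ hv.2.1 with h | h
        · exact absurd h.1 hp.2.not_gt
        · exact h.2
      · rw [← h.1]; simpa using hv
    · have h4 := h3 (p 0) Set.left_mem_uIcc
      obtain ⟨rfl, rfl⟩ := hv.unique h4 hp h1 hα hβ hα' hβ'
      exact ⟨h2, h3⟩
  · rintro ⟨h1, h2⟩
    exact Or.inr ⟨α, hα, β, hβ, hp, h1, h2⟩

lemma PSRel.trans {R : Finset J} {p q w : Fin 2 → ℝ} (h : PSRel F R p q) (h' : PSRel F R q w) :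
    PSRel F R p w := by
  by_cases hg : ∃ α ∈ R, ∃ β ∈ R, PSBtw F α β q ∧ PSValid F R α β (q 0)
  · obtain ⟨α, hα, β, hβ, hq, hv⟩ := hg
    have h1 := (psRel_iff_of_valid hα hβ hq hv p).1 h.symm
    have h2 := (psRel_iff_of_valid hα hβ hq hv w).1 h'
    refine Or.inr ⟨α, hα, β, hβ, h1.1, h2.1, fun x hx => ?_⟩
    rcases Set.uIcc_subset_uIcc_union_uIcc (b := q 0) hx with hx | hx
    · exact h1.2 x (by rwa [Set.uIcc_comm])
    · exact h2.2 x hx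
  · have h1 : PSVert F R p q := by
      rcases h with h | ⟨α, hα, β, hβ, h1, h2, h3⟩
      · exact h
      · exact absurd ⟨α, hα, β, hβ, h2, h3 _ Set.right_mem_uIcc⟩ hg
    have h2 : PSVert F R q w := by
      rcases h' with h | ⟨α, hα, β, hβ, h1, h2, h3⟩
      · exact h
      · exact absurd ⟨α, hα, β, hβ, h1, h3 _ Set.left_mem_uIcc⟩ hg
    refine Or.inl ⟨h1.1.trans h2.1, fun c hc hd => ?_⟩
    have a := h1.2 c hc hd
    have b := h2.2 c hc (h1.1 ▸ hd)
    rw [← h1.1] at b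
    rcases a with a | a <;> rcases b with b | b
    · exact Or.inl ⟨a.1, b.2⟩
    · exact absurd b.1 a.2.not_gt
    · exact absurd b.1 a.2.not_gt
    · exact Or.inr ⟨a.1, b.2⟩

lemma ps_nearest {R : Finset J} {p : Fin 2 → ℝ} (hoff : PSOff F R p)
    (hb : ∃ b ∈ R, ∀ x, (F b).Dom x ∧ (F b).φ x = ⊥)
    (ht : ∃ t ∈ R, ∀ x, (F t).Dom x ∧ (F t).φ x = ⊤) :
    ∃ α ∈ R, ∃ β ∈ R, (F α).Dom (p 0) ∧ (F β).Dom (p 0) ∧ PSBtw F α β p ∧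
      ∀ c ∈ R, (F c).Dom (p 0) →
        (F c).φ (p 0) ≤ (F α).φ (p 0) ∨ (F β).φ (p 0) ≤ (F c).φ (p 0) := by
  obtain ⟨b, hbR, hb⟩ := hb
  obtain ⟨t, htR, ht⟩ := ht
  obtain ⟨α, hα, hαm⟩ := Finset.exists_max_image
    (R.filter (fun c => (F c).Dom (p 0) ∧ (F c).φ (p 0) < (p 1 : ℝ))) (fun c => (F c).φ (p 0))
    ⟨b, Finset.mem_filter.2 ⟨hbR, (hb _).1, by rw [(hb _).2]; exact EReal.bot_lt_coe _⟩⟩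
  obtain ⟨β, hβ, hβm⟩ := Finset.exists_min_image
    (R.filter (fun c => (F c).Dom (p 0) ∧ ((p 1 : ℝ) : EReal) < (F c).φ (p 0)))
    (fun c => (F c).φ (p 0))
    ⟨t, Finset.mem_filter.2 ⟨htR, (ht _).1, by rw [(ht _).2]; exact EReal.coe_lt_top _⟩⟩
  rw [Finset.mem_filter] at hα hβ
  refine ⟨α, hα.1, β, hβ.1, hα.2.1, hβ.2.1, ⟨hα.2.2, hβ.2.2⟩, fun c hc hd => ?_⟩
  rcases lt_trichotomy ((F c).φ (p 0)) (p 1 : ℝ) with h1 | h1 | h1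
  · exact Or.inl (hαm c (Finset.mem_filter.2 ⟨hc, hd, h1⟩))
  · exact absurd ⟨hd, h1⟩ (hoff c hc)
  · exact Or.inr (hβm c (Finset.mem_filter.2 ⟨hc, hd, h1⟩))

lemma ps_not_valid_witness {R : Finset J} {α β : J} {x : ℝ} (hα : α ∈ R)
    (h : ¬ PSValid F R α β x) : ∃ c ∈ R, ∀ R' : Finset J, c ∈ R' → ¬ PSValid F R' α β x := by
  by_contra! hcon
  apply h
  obtain ⟨R0, h0, hv0⟩ := hcon α hα
  refine ⟨hv0.1, hv0.2.1, hv0.2.2.1, fun c hc h1 h2 h3 => ?_⟩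
  obtain ⟨R1, hc1, hv1⟩ := hcon c hc
  exact hv1.2.2.2 c hc1 h1 h2 h3

lemma ps_right_witness (P : Finset (Fin 2 → ℝ)) {R : Finset J} {α β : J} (x0 : ℝ) (hα : α ∈ R) :
    ∃ c ∈ R, ∀ R' : Finset J, c ∈ R' → ∀ q ∈ P, x0 ≤ q 0 →
      (∀ x ∈ Set.Icc x0 (q 0), PSValid F R' α β x) → ∀ x ∈ Set.Icc x0 (q 0), PSValid F R α β x := by
  by_cases hne : (P.filter (fun q => ∃ x ∈ Set.Icc x0 (q 0), ¬ PSValid F R α β x)).Nonempty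
  · obtain ⟨q, hq, hqm⟩ := Finset.exists_min_image _ (fun q => q 0) hne
    rw [Finset.mem_filter] at hq
    obtain ⟨-, x, hx, hxv⟩ := hq
    obtain ⟨c, hc, hcR⟩ := ps_not_valid_witness hα hxv
    refine ⟨c, hc, fun R' hR' q' hq' hle hv => ?_⟩
    by_contra! hcon
    have := hqm q' (Finset.mem_filter.2 ⟨hq', hcon⟩)
    exact hcR R' hR' (hv x ⟨hx.1, hx.2.trans this⟩)
  · refine ⟨α, hα, fun R' hR' q' hq' hle hv => ?_⟩
    by_contra! hcon
    exact hne ⟨q', Finset.mem_filter.2 ⟨hq', hcon⟩⟩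

lemma ps_left_witness (P : Finset (Fin 2 → ℝ)) {R : Finset J} {α β : J} (x0 : ℝ) (hα : α ∈ R) :
    ∃ c ∈ R, ∀ R' : Finset J, c ∈ R' → ∀ q ∈ P, q 0 ≤ x0 →
      (∀ x ∈ Set.Icc (q 0) x0, PSValid F R' α β x) → ∀ x ∈ Set.Icc (q 0) x0, PSValid F R α β x := by
  by_cases hne : (P.filter (fun q => ∃ x ∈ Set.Icc (q 0) x0, ¬ PSValid F R α β x)).Nonempty
  · obtain ⟨q, hq, hqm⟩ := Finset.exists_max_image _ (fun q => q 0) hne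
    rw [Finset.mem_filter] at hq
    obtain ⟨-, x, hx, hxv⟩ := hq
    obtain ⟨c, hc, hcR⟩ := ps_not_valid_witness hα hxv
    refine ⟨c, hc, fun R' hR' q' hq' hle hv => ?_⟩
    by_contra! hcon
    have := hqm q' (Finset.mem_filter.2 ⟨hq', hcon⟩)
    exact hcR R' hR' (hv x ⟨this.trans hx.1, hx.2⟩)
  · refine ⟨α, hα, fun R' hR' q' hq' hle hv => ?_⟩
    by_contra! hcon
    exact hne ⟨q', Finset.mem_filter.2 ⟨hq', hcon⟩⟩

lemma ps_card4 {α : Type*} (a b c d : α) : ({a, b, c, d} : Finset α).card ≤ 4 := by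
  refine (Finset.card_insert_le _ _).trans ?_
  have h3 : ({b, c, d} : Finset α).card ≤ 3 := by
    refine (Finset.card_insert_le _ _).trans ?_
    have h2 : ({c, d} : Finset α).card ≤ 2 := by
      refine (Finset.card_insert_le _ _).trans ?_
      simp
    omega
  omega

/-- Stability: each cell is determined by at most four arcs. -/
lemma ps_stable (P : Finset (Fin 2 → ℝ)) {R : Finset J} {p : Fin 2 → ℝ} (hoff : PSOff F R p)
    (hb : ∃ b ∈ R, ∀ x, (F b).Dom x ∧ (F b).φ x = ⊥)
    (ht : ∃ t ∈ R, ∀ x, (F t).Dom x ∧ (F t).φ x = ⊤) :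
    ∃ D ⊆ R, D.card ≤ 4 ∧ ∀ R', D ⊆ R' → R' ⊆ R → ∀ q ∈ P, PSRel F R' p q ↔ PSRel F R p q := by
  obtain ⟨α, hα, β, hβ, hdα, hdβ, hbt, hnear⟩ := ps_nearest hoff hb ht
  by_cases hv : PSValid F R α β (p 0)
  · obtain ⟨c1, hc1, h1⟩ := ps_right_witness (F := F) (β := β) P (p 0) hα
    obtain ⟨c2, hc2, h2⟩ := ps_left_witness (F := F) (β := β) P (p 0) hα
    refine ⟨{α, β, c1, c2}, ?_, ps_card4 _ _ _ _, ?_⟩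
    · intro z hz
      simp only [Finset.mem_insert, Finset.mem_singleton] at hz
      rcases hz with rfl | rfl | rfl | rfl <;> assumption
    · intro R' hD hR' q hq
      have mα : α ∈ R' := hD (by simp)
      have mβ : β ∈ R' := hD (by simp)
      have m1 : c1 ∈ R' := hD (by simp)
      have m2 : c2 ∈ R' := hD (by simp)
      rw [psRel_iff_of_valid hα hβ hbt hv, psRel_iff_of_valid mα mβ hbt (hv.mono hR')]
      refine and_congr_right fun _ => ⟨fun h => ?_, fun h x hx => (h x hx).mono hR'⟩
      rcases le_total (p 0) (q 0) with hle | hle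
      · rw [Set.uIcc_of_le hle] at h ⊢
        exact h1 R' m1 q hq hle h
      · rw [Set.uIcc_of_ge hle] at h ⊢
        exact h2 R' m2 q hq hle h
  · have : ∃ c ∈ R, c ≠ α ∧ c ≠ β ∧ (F c).Dom (p 0) ∧
        ¬ ((F c).φ (p 0) < (F α).φ (p 0) ∨ (F β).φ (p 0) < (F c).φ (p 0)) := by
      by_contra! hcon
      exact hv ⟨hdα, hdβ, hbt.1.trans hbt.2, fun c hc h1 h2 h3 => by
        by_contra hx
        exact hx (hcon c hc h1 h2 h3)⟩
    obtain ⟨c, hc, hcα, hcβ, hdc, hcn⟩ := this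
    have nogap : ∀ R' ⊆ R, α ∈ R' → β ∈ R' → c ∈ R' → ∀ α' ∈ R', ∀ β' ∈ R', PSBtw F α' β' p →
        ¬ PSValid F R' α' β' (p 0) := by
      intro R' hR' mα mβ mc α' hα' β' hβ' hbt' hv'
      have e1 : α' = α := by
        by_contra hne
        have a2 : α ≠ β' := fun e => by
          have := hbt.1; rw [e] at this; exact lt_asymm this hbt'.2
        rcases hv'.2.2.2 α mα (Ne.symm hne) a2 hdα with h | h
        · rcases hnear α' (hR' hα') hv'.1 with h' | h'
          · exact absurd h h'.not_gt
          · exact absurd (hbt'.1.trans hbt.2) h'.not_gt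
        · exact lt_asymm h (hbt.1.trans hbt'.2)
      have e2 : β' = β := by
        by_contra hne
        have a2 : β ≠ α' := fun e => by
          have := hbt.2; rw [e] at this; exact lt_asymm this hbt'.1
        rcases hv'.2.2.2 β mβ a2 (Ne.symm hne) hdβ with h | h
        · exact lt_asymm h (hbt'.1.trans hbt.2)
        · rcases hnear β' (hR' hβ') hv'.2.1 with h' | h'
          · exact absurd (hbt.1.trans hbt'.2) h'.not_gt
          · exact absurd h h'.not_gt
      subst e1 e2
      exact hcn (hv'.2.2.2 c mc hcα hcβ hdc)
    refine ⟨{α, β, c, c}, ?_, ps_card4 _ _ _ _, ?_⟩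
    · intro z hz
      simp only [Finset.mem_insert, Finset.mem_singleton] at hz
      rcases hz with rfl | rfl | rfl | rfl <;> assumption
    · intro R' hD hR' q hq
      have mα : α ∈ R' := hD (by simp)
      have mβ : β ∈ R' := hD (by simp)
      have mc : c ∈ R' := hD (by simp)
      constructor
      · rintro (h | ⟨α', hα', β', hβ', h1, h2, h3⟩)
        · refine Or.inl ⟨h.1, fun c hc hd => ?_⟩
          have hαq : (F α).φ (p 0) < (q 1 : ℝ) := by
            rcases h.2 α mα hdα with h | h
            · exact h.2
            · exact absurd h.1 hbt.1.not_gt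
          have hβq : ((q 1 : ℝ) : EReal) < (F β).φ (p 0) := by
            rcases h.2 β mβ hdβ with h | h
            · exact absurd h.1 hbt.2.not_gt
            · exact h.2
          rcases hnear c hc hd with h | h
          · exact Or.inl ⟨h.trans_lt hbt.1, h.trans_lt hαq⟩
          · exact Or.inr ⟨hbt.2.trans_le h, hβq.trans_le h⟩
        · exact absurd (h3 _ Set.left_mem_uIcc) (nogap R' hR' mα mβ mc α' hα' β' hβ' h1)
      · rintro (h | ⟨α', hα', β', hβ', h1, h2, h3⟩)
        · exact Or.inl ⟨h.1, fun c hc hd => h.2 c (hR' hc) hd⟩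
        · exact absurd (h3 _ Set.left_mem_uIcc)
            (nogap R subset_rfl hα hβ hc α' hα' β' hβ' h1)

end
end


section
open Filter Topology
section
variable {J : Type*} {F : J → PSArc}

lemma ps_event {R : Finset J} {α β : J} (hα : α ∈ R) (hβ : β ∈ R) {x0 : ℝ}
    (hends : ∀ c ∈ R, (x0 : EReal) ≠ (F c).l ∧ (x0 : EReal) ≠ (F c).u)
    (hf1 : ∃ᶠ x in 𝓝 x0, PSValid F R α β x) (hf2 : ∃ᶠ x in 𝓝 x0, ¬ PSValid F R α β x) :
    ∃ c ∈ R, (α ≠ c ∧ (F α).Dom x0 ∧ (F c).Dom x0 ∧ (F α).φ x0 = (F c).φ x0) ∨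
      (β ≠ c ∧ (F β).Dom x0 ∧ (F c).Dom x0 ∧ (F β).φ x0 = (F c).φ x0) := by
  by_contra! hcon
  have dα : (F α).Dom x0 := by
    by_contra h
    have := PSArc.not_dom_eventually h (hends α hα).1 (hends α hα).2
    exact hf1 (this.mono fun z hz hv => hz hv.1)
  have dβ : (F β).Dom x0 := by
    by_contra h
    have := PSArc.not_dom_eventually h (hends β hβ).1 (hends β hβ).2
    exact hf1 (this.mono fun z hz hv => hz hv.2.1)
  have cα := (F α).cont x0 dα.1 dα.2
  have cβ := (F β).cont x0 dβ.1 dβ.2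
  have hαβ : α ≠ β := by
    rintro rfl
    obtain ⟨x, hx⟩ := hf1.exists
    exact lt_irrefl _ hx.2.2.1
  have hne : (F α).φ x0 ≠ (F β).φ x0 := (hcon β hβ).1 hαβ dα dβ
  have hlt : (F α).φ x0 < (F β).φ x0 := by
    rcases lt_or_gt_of_ne hne with h | h
    · exact h
    · exfalso
      exact hf1 ((cβ.eventually_lt cα h).mono fun z hz hv => lt_asymm hz hv.2.2.1)
  have hall : ∀ c ∈ R, ∀ᶠ x in 𝓝 x0, c ≠ α → c ≠ β → (F c).Dom x →
      (F c).φ x < (F α).φ x ∨ (F β).φ x < (F c).φ x := by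
    intro c hc
    by_cases h1 : c = α
    · exact Eventually.of_forall fun x h => absurd h1 h
    by_cases h2 : c = β
    · exact Eventually.of_forall fun x _ h => absurd h2 h
    by_cases dc : (F c).Dom x0
    · have cc := (F c).cont x0 dc.1 dc.2
      have n1 := (hcon c hc).1 (Ne.symm h1) dα dc
      have n2 := (hcon c hc).2 (Ne.symm h2) dβ dc
      rcases lt_or_gt_of_ne n1 with a | a
      · rcases lt_or_gt_of_ne n2 with b | b
        · exact (cβ.eventually_lt cc b).mono fun x hx _ _ _ => Or.inr hx
        · exfalso
          refine hf1 (((cα.eventually_lt cc a).and ((cc.eventually_lt cβ b).and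
            dc.eventually)).mono fun x hx hv => ?_)
          rcases hv.2.2.2 c hc h1 h2 hx.2.2 with h | h
          · exact lt_asymm h hx.1
          · exact lt_asymm h hx.2.1
      · exact (cc.eventually_lt cα a).mono fun x hx _ _ _ => Or.inl hx
    · exact (PSArc.not_dom_eventually dc (hends c hc).1 (hends c hc).2).mono
        fun x hx _ _ h => absurd h hx
  have hall' := (Filter.eventually_all_finset R).2 hall
  refine hf2 ((dα.eventually.and (dβ.eventually.and ((cα.eventually_lt cβ hlt).and hall'))).mono
    fun x hx h => h ⟨hx.1, hx.2.1, hx.2.2.1, fun c hc => hx.2.2.2 c hc⟩)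

/-- point `p` has key `(a, e)` of the given type. -/
def PSKey (F : J → PSArc) (R : Finset J) (p : Fin 2 → ℝ) (k : (J × EReal) × (Bool × Bool)) : Prop :=
  match k with
  | ((a, e), (true, true)) => a ∈ R ∧ ∃ β ∈ R, PSBtw F a β p ∧ e < (p 0 : ℝ) ∧
      ∀ x : ℝ, e < x → x ≤ p 0 → PSValid F R a β x
  | ((b, e), (true, false)) => b ∈ R ∧ ∃ α ∈ R, PSBtw F α b p ∧ e < (p 0 : ℝ) ∧
      ∀ x : ℝ, e < x → x ≤ p 0 → PSValid F R α b x
  | ((a, e), (false, true)) => ((p 0 : ℝ) : EReal) = e ∧ (F a).φ (p 0) < (p 1 : ℝ) ∧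
      ∀ c ∈ R, (F c).Dom (p 0) →
        (F c).φ (p 0) ≤ (F a).φ (p 0) ∨ ((p 1 : ℝ) : EReal) < (F c).φ (p 0)
  | ((b, e), (false, false)) => ((p 0 : ℝ) : EReal) = e ∧ ((p 1 : ℝ) : EReal) < (F b).φ (p 0) ∧
      ∀ c ∈ R, (F c).Dom (p 0) →
        (F b).φ (p 0) ≤ (F c).φ (p 0) ∨ (F c).φ (p 0) < (p 1 : ℝ)

lemma PSKey.rel_of_le {R : Finset J} {p q : Fin 2 → ℝ} {k : (J × EReal) × (Bool × Bool)}
    (hp : PSKey F R p k) (hq : PSKey F R q k) (hle : p 0 ≤ q 0) : PSRel F R p q := by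
  obtain ⟨⟨a, e⟩, b1, b2⟩ := k
  cases b1 <;> cases b2
  · obtain ⟨h1, h2, h3⟩ := hp
    obtain ⟨g1, g2, g3⟩ := hq
    have hx : p 0 = q 0 := by rw [← g1] at h1; exact_mod_cast h1
    rw [← hx] at g2 g3
    refine Or.inl ⟨hx, fun c hc hd => ?_⟩
    rcases h3 c hc hd with h | h
    · exact Or.inr ⟨h2.trans_le h, g2.trans_le h⟩
    · rcases g3 c hc hd with g | g
      · exact absurd h (h2.trans_le g).not_gt
      · exact Or.inl ⟨h, g⟩
  · obtain ⟨h1, h2, h3⟩ := hp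
    obtain ⟨g1, g2, g3⟩ := hq
    have hx : p 0 = q 0 := by rw [← g1] at h1; exact_mod_cast h1
    rw [← hx] at g2 g3
    refine Or.inl ⟨hx, fun c hc hd => ?_⟩
    rcases h3 c hc hd with h | h
    · exact Or.inl ⟨h.trans_lt h2, h.trans_lt g2⟩
    · rcases g3 c hc hd with g | g
      · exact absurd h (g.trans_lt h2).not_gt
      · exact Or.inr ⟨h, g⟩
  · obtain ⟨ha, α, hα, h1, h2, h3⟩ := hp
    obtain ⟨-, α', hα', g1, g2, g3⟩ := hq
    have e1 := (h3 (p 0) h2 le_rfl).left_unique (g3 (p 0) h2 hle) hα hα'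
    subst e1
    refine Or.inr ⟨α, hα, a, ha, h1, g1, fun x hx => ?_⟩
    rw [Set.uIcc_of_le hle] at hx
    exact g3 x (h2.trans_le (by exact_mod_cast hx.1)) hx.2
  · obtain ⟨ha, β, hβ, h1, h2, h3⟩ := hp
    obtain ⟨-, β', hβ', g1, g2, g3⟩ := hq
    have e1 := (h3 (p 0) h2 le_rfl).right_unique (g3 (p 0) h2 hle) hβ hβ'
    subst e1
    refine Or.inr ⟨a, ha, β, hβ, h1, g1, fun x hx => ?_⟩
    rw [Set.uIcc_of_le hle] at hx
    exact g3 x (h2.trans_le (by exact_mod_cast hx.1)) hx.2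

lemma PSKey.rel {R : Finset J} {p q : Fin 2 → ℝ} {k : (J × EReal) × (Bool × Bool)}
    (hp : PSKey F R p k) (hq : PSKey F R q k) : PSRel F R p q := by
  rcases le_total (p 0) (q 0) with h | h
  · exact hp.rel_of_le hq h
  · exact (hq.rel_of_le hp h).symm

def PSEventAt (F : J → PSArc) (R : Finset J) (a : J) (e : EReal) : Prop :=
  (∃ c ∈ R, e = (F c).l ∨ e = (F c).u) ∨
  ∃ c ∈ R, a ≠ c ∧ ∃ x : ℝ, e = x ∧ (F a).Dom x ∧ (F c).Dom x ∧ (F a).φ x = (F c).φ x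

lemma ps_exists_key {R : Finset J} {p : Fin 2 → ℝ} (hoff : PSOff F R p)
    (hb : ∃ b ∈ R, ∀ x, (F b).Dom x ∧ (F b).φ x = ⊥)
    (ht : ∃ t ∈ R, ∀ x, (F t).Dom x ∧ (F t).φ x = ⊤) :
    ∃ k : (J × EReal) × (Bool × Bool), k.1.1 ∈ R ∧ PSEventAt F R k.1.1 k.1.2 ∧ PSKey F R p k := by
  obtain ⟨α, hα, β, hβ, hdα, hdβ, hbt, hnear⟩ := ps_nearest hoff hb ht
  have keyα : PSKey F R p ((α, ((p 0 : ℝ) : EReal)), (false, true)) :=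
    ⟨rfl, hbt.1, fun c hc hd => (hnear c hc hd).imp id fun h => hbt.2.trans_le h⟩
  have keyβ : PSKey F R p ((β, ((p 0 : ℝ) : EReal)), (false, false)) :=
    ⟨rfl, hbt.2, fun c hc hd => (hnear c hc hd).symm.imp id fun h => h.trans_lt hbt.1⟩
  by_cases hv : PSValid F R α β (p 0)
  · set B : Set ℝ := {x | x < p 0 ∧ ¬ PSValid F R α β x} with hB
    set e : EReal := sSup ((fun x : ℝ => (x : EReal)) '' B) with he
    have hle : e ≤ (p 0 : ℝ) := by
      refine sSup_le ?_
      rintro _ ⟨x, hx, rfl⟩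
      exact EReal.coe_le_coe_iff.2 hx.1.le
    have hvalid : ∀ x : ℝ, e < x → x ≤ p 0 → PSValid F R α β x := by
      intro x hx hxp
      rcases hxp.eq_or_lt with rfl | h
      · exact hv
      · by_contra hnv
        have hxB : (x : EReal) ∈ (fun x : ℝ => (x : EReal)) '' B := ⟨x, ⟨h, hnv⟩, rfl⟩
        exact absurd (le_sSup hxB) hx.not_ge
    -- location of `e`
    have hev : PSEventAt F R α e ∨ PSEventAt F R β e := by
      by_cases hends : ∃ c ∈ R, e = (F c).l ∨ e = (F c).u
      · exact Or.inl (Or.inl hends)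
      · push Not at hends
        obtain ⟨b, hbR, hb⟩ := hb
        have hbot : e ≠ ⊥ := by
          intro h
          apply (hends b hbR).1
          rw [h]
          symm
          rw [EReal.eq_bot_iff_forall_lt]
          intro y
          exact (hb y).1.1
        have htop : e ≠ ⊤ := (hle.trans_lt (EReal.coe_lt_top _)).ne
        lift e to ℝ using ⟨htop, hbot⟩ with x0 hx0
        have hle' : x0 ≤ p 0 := by exact_mod_cast hle
        have f1 : ∃ᶠ x in 𝓝 x0, PSValid F R α β x := by
          rcases hle'.eq_or_lt with h | h
          · rw [h]
            exact frequently_iff.2 fun hU => ⟨_, mem_of_mem_nhds hU, hv⟩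
          · have : ∃ᶠ x in 𝓝[>] x0, PSValid F R α β x := by
              refine Eventually.frequently ?_
              filter_upwards [Ioc_mem_nhdsGT h] with x hx
              exact hvalid x (by exact_mod_cast hx.1) hx.2
            exact this.filter_mono nhdsWithin_le_nhds
        have f2 : ∃ᶠ x in 𝓝 x0, ¬ PSValid F R α β x := by
          intro hcon
          simp only [not_not] at hcon
          obtain ⟨l, u, hx0m, hlu⟩ := mem_nhds_iff_exists_Ioo_subset.1 hcon
          have : (x0 : EReal) ≤ (l : ℝ) := by
            rw [he]
            refine sSup_le ?_
            rintro _ ⟨x, hx, rfl⟩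
            by_contra hlt
            have hlt' : l < x := by
              rw [not_le] at hlt
              exact EReal.coe_lt_coe_iff.1 hlt
            have hxx0 : x ≤ x0 := by
              have : (x : EReal) ≤ x0 := he ▸ le_sSup (Set.mem_image_of_mem _ hx)
              exact_mod_cast this
            exact hx.2 (hlu ⟨hlt', hxx0.trans_lt hx0m.2⟩)
          have : x0 ≤ l := by exact_mod_cast this
          exact absurd hx0m.1 this.not_gt
        obtain ⟨c, hc, h | h⟩ := ps_event hα hβ hends f1 f2
        · exact Or.inl (Or.inr ⟨c, hc, h.1, x0, rfl, h.2⟩)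
        · exact Or.inr (Or.inr ⟨c, hc, h.1, x0, rfl, h.2⟩)
    rcases hle.eq_or_lt with h | h
    · rw [h] at hev
      rcases hev with hev | hev
      · exact ⟨_, hα, hev, keyα⟩
      · exact ⟨_, hβ, hev, keyβ⟩
    · rcases hev with hev | hev
      · exact ⟨((α, e), (true, true)), hα, hev, hα, β, hβ, hbt, h, hvalid⟩
      · exact ⟨((β, e), (true, false)), hβ, hev, hβ, α, hα, hbt, h, hvalid⟩
  · have : ∃ c ∈ R, c ≠ α ∧ c ≠ β ∧ (F c).Dom (p 0) ∧
        ¬ ((F c).φ (p 0) < (F α).φ (p 0) ∨ (F β).φ (p 0) < (F c).φ (p 0)) := by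
      by_contra! hcon
      exact hv ⟨hdα, hdβ, hbt.1.trans hbt.2, fun c hc h1 h2 h3 => by
        by_contra hx
        exact hx (hcon c hc h1 h2 h3)⟩
    obtain ⟨c, hc, hcα, hcβ, hdc, hcn⟩ := this
    push Not at hcn
    rcases hnear c hc hdc with h | h
    · exact ⟨_, hα, Or.inr ⟨c, hc, hcα.symm, p 0, rfl, hdα, hdc, le_antisymm hcn.1 h⟩, keyα⟩
    · exact ⟨_, hβ, Or.inr ⟨c, hc, hcβ.symm, p 0, rfl, hdβ, hdc, le_antisymm h hcn.2⟩, keyβ⟩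

def PSCells (F : J → PSArc) (P : Finset (Fin 2 → ℝ)) (R : Finset J) : Finset (Finset (Fin 2 → ℝ)) :=
  (P.filter (PSOff F R)).image (fun p => P.filter (PSRel F R p))

lemma ps_cells_card (P : Finset (Fin 2 → ℝ)) (R : Finset J) (s : ℕ)
    (hb : ∃ b ∈ R, ∀ x, (F b).Dom x ∧ (F b).φ x = ⊥)
    (ht : ∃ t ∈ R, ∀ x, (F t).Dom x ∧ (F t).φ x = ⊤)
    (hI : ∀ a ∈ R, ∀ c ∈ R, a ≠ c →
      {x : ℝ | (F a).Dom x ∧ (F c).Dom x ∧ (F a).φ x = (F c).φ x}.Finite ∧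
      {x : ℝ | (F a).Dom x ∧ (F c).Dom x ∧ (F a).φ x = (F c).φ x}.ncard ≤ s) :
    (PSCells F P R).card ≤ 4 * (s + 2) * R.card ^ 2 := by
  set X : J → J → Finset EReal := fun a c =>
    if h : {x : ℝ | (F a).Dom x ∧ (F c).Dom x ∧ (F a).φ x = (F c).φ x}.Finite then
      h.toFinset.image (fun x : ℝ => (x : EReal)) else ∅ with hX
  set E : J → Finset EReal := fun a =>
    (R.image (fun c => (F c).l) ∪ R.image (fun c => (F c).u)) ∪ (R.erase a).biUnion (X a) with hE
  have hEcard : ∀ a ∈ R, (E a).card ≤ (s + 2) * R.card := by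
    intro a ha
    have h1 : ((R.erase a).biUnion (X a)).card ≤ R.card * s := by
      refine (Finset.card_biUnion_le_card_mul _ _ s fun c hc => ?_).trans
        (Nat.mul_le_mul_right _ (Finset.card_le_card (Finset.erase_subset _ _)))
      rw [Finset.mem_erase] at hc
      obtain ⟨hf, hn⟩ := hI a ha c hc.2 hc.1.symm
      simp only [hX, hf, dite_true]
      refine Finset.card_image_le.trans ?_
      rwa [← Set.ncard_eq_toFinset_card _ hf]
    calc (E a).card ≤ (R.card + R.card) + R.card * s := by
          refine (Finset.card_union_le _ _).trans (add_le_add ?_ h1)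
          exact (Finset.card_union_le _ _).trans
            (add_le_add Finset.card_image_le Finset.card_image_le)
      _ = (s + 2) * R.card := by ring
  set K : Finset ((J × EReal) × (Bool × Bool)) :=
    (R.biUnion fun a => (E a).image fun e => (a, e)) ×ˢ (Finset.univ : Finset (Bool × Bool)) with hK
  have hKcard : K.card ≤ 4 * (s + 2) * R.card ^ 2 := by
    rw [hK, Finset.card_product]
    have h1 : (R.biUnion fun a => (E a).image fun e => (a, e)).card ≤ R.card * ((s + 2) * R.card) :=
      Finset.card_biUnion_le_card_mul _ _ _ fun a ha => Finset.card_image_le.trans (hEcard a ha)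
    have h2 : (Finset.univ : Finset (Bool × Bool)).card = 4 := rfl
    rw [h2]
    calc _ ≤ R.card * ((s + 2) * R.card) * 4 := Nat.mul_le_mul_right _ h1
      _ = _ := by ring
  refine le_trans ?_ hKcard
  refine Finset.card_le_card_of_forall_subsingleton
    (fun Δ k => ∃ p ∈ P, PSOff F R p ∧ Δ = P.filter (PSRel F R p) ∧ PSKey F R p k) ?_ ?_
  · intro Δ hΔ
    simp only [PSCells, Finset.mem_image, Finset.mem_filter] at hΔ
    obtain ⟨p, ⟨hp, hoff⟩, rfl⟩ := hΔ
    obtain ⟨⟨⟨a, e⟩, t⟩, hk1, hk2, hk3⟩ := ps_exists_key hoff hb ht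
    refine ⟨_, ?_, p, hp, hoff, rfl, hk3⟩
    simp only [hK, Finset.mem_product, Finset.mem_biUnion, Finset.mem_image, Finset.mem_univ,
      and_true]
    refine ⟨a, hk1, e, ?_, rfl⟩
    simp only [hE, Finset.mem_union, Finset.mem_image, Finset.mem_biUnion, Finset.mem_erase]
    rcases hk2 with ⟨c, hc, h | h⟩ | ⟨c, hc, hne, x, hx, h⟩
    · exact Or.inl (Or.inl ⟨c, hc, h.symm⟩)
    · exact Or.inl (Or.inr ⟨c, hc, h.symm⟩)
    · refine Or.inr ⟨c, ⟨hne.symm, hc⟩, ?_⟩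
      have hf := (hI a hk1 c hc hne).1
      simp only [hX, hf, dite_true]
      exact Finset.mem_image.2 ⟨x, by simpa using h, hx.symm⟩
  · intro k hk Δ hΔ Δ' hΔ'
    obtain ⟨-, p, hp, ho, rfl, hkp⟩ := hΔ
    obtain ⟨-, q, hq, ho', rfl, hkq⟩ := hΔ'
    have hr := hkp.rel hkq
    ext w
    simp only [Finset.mem_filter]
    exact and_congr_right fun _ => ⟨fun h => hr.symm.trans h, fun h => hr.trans h⟩

lemma ps_cells_sum (P : Finset (Fin 2 → ℝ)) (R : Finset J) :
    ∑ Δ ∈ PSCells F P R, Δ.card ≤ P.card := by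
  rw [← Finset.card_biUnion]
  · refine Finset.card_le_card ?_
    intro p hp
    simp only [PSCells, Finset.mem_biUnion, Finset.mem_image] at hp
    obtain ⟨_, ⟨q, hq, rfl⟩, hp⟩ := hp
    exact (Finset.mem_filter.1 hp).1
  · intro Δ hΔ Δ' hΔ' hne
    simp only [Finset.mem_coe, PSCells, Finset.mem_image] at hΔ hΔ'
    obtain ⟨p, hp, rfl⟩ := hΔ
    obtain ⟨q, hq, rfl⟩ := hΔ'
    refine Finset.disjoint_left.2 ?_
    intro w hw hw'
    rw [Finset.mem_filter] at hw hw'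
    apply hne
    have hr := hw.2.trans hw'.2.symm
    ext w
    simp only [Finset.mem_filter]
    exact and_congr_right fun _ => ⟨fun h => hr.symm.trans h, fun h => hr.trans h⟩

lemma ps_cells_off {P : Finset (Fin 2 → ℝ)} {R : Finset J} {Δ : Finset (Fin 2 → ℝ)}
    (hΔ : Δ ∈ PSCells F P R) {p : Fin 2 → ℝ} (hp : p ∈ Δ) : PSOff F R p := by
  simp only [PSCells, Finset.mem_image] at hΔ
  obtain ⟨q, hq, rfl⟩ := hΔ
  exact (Finset.mem_filter.1 hp).2.symm.off

lemma ps_cells_cover {P : Finset (Fin 2 → ℝ)} {R : Finset J} {p : Fin 2 → ℝ} (hp : p ∈ P)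
    (hoff : PSOff F R p) : ∃ Δ ∈ PSCells F P R, p ∈ Δ :=
  ⟨_, Finset.mem_image_of_mem _ (Finset.mem_filter.2 ⟨hp, hoff⟩),
    Finset.mem_filter.2 ⟨hp, PSRel.refl hoff⟩⟩

lemma ps_cells_stable {P : Finset (Fin 2 → ℝ)} {R : Finset J}
    (hb : ∃ b ∈ R, ∀ x, (F b).Dom x ∧ (F b).φ x = ⊥)
    (ht : ∃ t ∈ R, ∀ x, (F t).Dom x ∧ (F t).φ x = ⊤) {Δ : Finset (Fin 2 → ℝ)}
    (hΔ : Δ ∈ PSCells F P R) :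
    ∃ D ⊆ R, D.card ≤ 4 ∧ ∀ R', D ⊆ R' → R' ⊆ R → Δ ∈ PSCells F P R' := by
  simp only [PSCells, Finset.mem_image, Finset.mem_filter] at hΔ
  obtain ⟨p, ⟨hp, hoff⟩, rfl⟩ := hΔ
  obtain ⟨D, hD, hc, h⟩ := ps_stable P hoff hb ht
  refine ⟨D, hD, hc, fun R' h1 h2 => ?_⟩
  simp only [PSCells, Finset.mem_image, Finset.mem_filter]
  refine ⟨p, ⟨hp, fun c hc => hoff c (h2 hc)⟩, ?_⟩
  ext q
  simp only [Finset.mem_filter]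
  exact and_congr_right fun hq => h R' h1 h2 q hq
end
end


section
open Filter Topology
section

/-- Kővári–Sós–Turán type bound. -/
lemma ps_kst {ι α : Type*} (on : ι → α → Prop) (B : Finset ι) (Δ : Finset α) (K s : ℕ)
    (hk : ∀ pts ⊆ Δ, pts.card = K + 1 → (B.filter (fun a => ∀ p ∈ pts, on a p)).card ≤ s)
    (lam : ℝ) (hlam : 0 < lam) :
    (∑ a ∈ B, ((Δ.filter (on a)).card : ℝ)) ≤
      K * B.card + B.card * Δ.card / lam + s * Δ.card * lam ^ K := by
  rcases Nat.eq_zero_or_pos Δ.card with h0 | hpos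
  · rw [Finset.card_eq_zero] at h0
    subst h0
    simp
    positivity
  have h1 : ∑ a ∈ B, (Δ.filter (on a)).card.choose (K + 1) ≤ s * Δ.card.choose (K + 1) := by
    have e1 : ∀ a, (Δ.filter (on a)).card.choose (K + 1) =
        ((Δ.powersetCard (K + 1)).filter (fun pts => ∀ p ∈ pts, on a p)).card := by
      intro a
      rw [← Finset.card_powersetCard]
      congr 1
      ext pts
      simp only [Finset.mem_powersetCard, Finset.mem_filter, Finset.subset_iff]
      constructor
      · rintro ⟨h, hc⟩; exact ⟨⟨fun x hx => (h hx).1, hc⟩, fun x hx => (h hx).2⟩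
      · rintro ⟨⟨h, hc⟩, h'⟩; exact ⟨fun x hx => ⟨h hx, h' x hx⟩, hc⟩
    simp_rw [e1, Finset.card_filter]
    rw [Finset.sum_comm]
    rw [← Finset.card_powersetCard, mul_comm, ← smul_eq_mul]
    refine Finset.sum_le_card_nsmul _ _ _ fun pts hpts => ?_
    rw [← Finset.card_filter]
    rw [Finset.mem_powersetCard] at hpts
    exact hk pts hpts.1 hpts.2
  have h2 : ∑ a ∈ B, (Δ.filter (on a)).card.descFactorial (K + 1) ≤ s * Δ.card ^ (K + 1) := by
    have : ∑ a ∈ B, (Δ.filter (on a)).card.descFactorial (K + 1) ≤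
        s * Δ.card.descFactorial (K + 1) := by
      simp_rw [Nat.descFactorial_eq_factorial_mul_choose]
      rw [← Finset.mul_sum]
      calc _ ≤ (K + 1).factorial * (s * Δ.card.choose (K + 1)) := Nat.mul_le_mul_left _ h1
        _ = _ := by ring
    exact this.trans (Nat.mul_le_mul_left _ (Nat.descFactorial_le_pow _ _))
  set t : ℝ := Δ.card / lam with ht
  have hΔ : (0 : ℝ) < Δ.card := by exact_mod_cast hpos
  have htpos : 0 < t := div_pos hΔ hlam
  have h3 : ∀ a ∈ B, ((Δ.filter (on a)).card : ℝ) ≤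
      K + t + ((Δ.filter (on a)).card.descFactorial (K + 1) : ℕ) / t ^ K := by
    intro a _
    set d := (Δ.filter (on a)).card with hd
    have g1 : (d - K) ^ (K + 1) ≤ d.descFactorial (K + 1) := by
      have := Nat.pow_sub_le_descFactorial d (K + 1)
      rwa [Nat.add_sub_add_right] at this
    have g2 : (d : ℝ) ≤ K + (d - K : ℕ) := by
      have : d ≤ K + (d - K) := by omega
      exact_mod_cast this
    have g3 : (((d - K : ℕ) : ℝ)) ^ (K + 1) ≤ (d.descFactorial (K + 1) : ℕ) := by
      exact_mod_cast g1
    have g4 : ((d - K : ℕ) : ℝ) ≤ t + (d.descFactorial (K + 1) : ℕ) / t ^ K := by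
      rcases le_total ((d - K : ℕ) : ℝ) t with h | h
      · have : (0:ℝ) ≤ (d.descFactorial (K + 1) : ℕ) / t ^ K := by positivity
        linarith
      · have : ((d - K : ℕ) : ℝ) ≤ (d.descFactorial (K + 1) : ℕ) / t ^ K := by
          rw [le_div_iff₀ (by positivity)]
          refine le_trans ?_ g3
          rw [pow_succ']
          gcongr
        linarith
    linarith
  refine (Finset.sum_le_sum h3).trans ?_
  rw [Finset.sum_add_distrib, Finset.sum_const, nsmul_eq_mul, ← Finset.sum_div]
  have h4 : ((∑ a ∈ B, ((Δ.filter (on a)).card.descFactorial (K + 1) : ℕ) : ℝ)) / t ^ K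
      ≤ s * Δ.card * lam ^ K := by
    rw [div_le_iff₀ (by positivity)]
    have : ((∑ a ∈ B, ((Δ.filter (on a)).card.descFactorial (K + 1) : ℕ) : ℝ)) ≤
        s * (Δ.card : ℝ) ^ (K + 1) := by exact_mod_cast h2
    refine this.trans (le_of_eq ?_)
    rw [ht, div_pow]
    field_simp
    ring
  have h5 : (B.card : ℝ) * (K + t) = K * B.card + B.card * Δ.card / lam := by
    rw [ht]; ring
  rw [h5]
  linarith

variable {ι : Type*}

lemma ps_common_points (F : ι → PSArc) (P : Finset (Fin 2 → ℝ)) (s : ℕ) (a c : ι)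
    (hI : {x : ℝ | (F a).Dom x ∧ (F c).Dom x ∧ (F a).φ x = (F c).φ x}.Finite ∧
      {x : ℝ | (F a).Dom x ∧ (F c).Dom x ∧ (F a).φ x = (F c).φ x}.ncard ≤ s) :
    (P.filter (fun p => PSOn F a p ∧ PSOn F c p)).card ≤ s := by
  refine le_trans ?_ hI.2
  rw [Set.ncard_eq_toFinset_card _ hI.1]
  refine Finset.card_le_card_of_injOn (fun p => p 0) ?_ ?_
  · intro p hp
    simp only [Finset.mem_coe, Finset.mem_filter] at hp
    simp only [Finset.mem_coe, Set.Finite.mem_toFinset, Set.mem_ofPred_eq]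
    exact ⟨hp.2.1.1, hp.2.2.1, hp.2.1.2.trans hp.2.2.2.symm⟩
  · intro p hp q hq hpq
    simp only [Finset.mem_coe, Finset.mem_filter] at hp hq
    simp only at hpq
    have h1 := hp.2.1.2
    have h2 := hq.2.1.2
    rw [hpq, h2] at h1
    ext i
    fin_cases i
    · exact hpq
    · exact (by exact_mod_cast h1.symm)

lemma ps_on_R (F : ι → PSArc) (P : Finset (Fin 2 → ℝ)) (A R : Finset ι) (hR : R ⊆ A) (s : ℕ)
    (hI : ∀ a ∈ A, ∀ c ∈ A, a ≠ c →
      {x : ℝ | (F a).Dom x ∧ (F c).Dom x ∧ (F a).φ x = (F c).φ x}.Finite ∧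
      {x : ℝ | (F a).Dom x ∧ (F c).Dom x ∧ (F a).φ x = (F c).φ x}.ncard ≤ s) :
    ∑ a ∈ A, ((P.filter (fun p => ¬ PSOff F R p)).filter (PSOn F a)).card ≤
      P.card + s * R.card * A.card := by
  set P1 := P.filter (fun p => ¬ PSOff F R p) with hP1
  have hex : ∀ p ∈ P1, ∃ c ∈ R, PSOn F c p := by
    intro p hp
    have := (Finset.mem_filter.1 hp).2
    unfold PSOff at this
    push Not at this
    exact this
  rcases isEmpty_or_nonempty ι with hι | hι
  · rw [Finset.eq_empty_of_isEmpty A]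
    simp
  choose! g hg using hex
  have h1 : ∀ a ∈ A, (P1.filter (PSOn F a)).card ≤
      (P1.filter (fun p => g p = a)).card + R.card * s := by
    intro a ha
    have hsub : P1.filter (PSOn F a) ⊆ P1.filter (fun p => g p = a) ∪
        (R.erase a).biUnion (fun c => P1.filter (fun p => PSOn F a p ∧ PSOn F c p)) := by
      intro p hp
      rw [Finset.mem_filter] at hp
      obtain ⟨hgR, hgon⟩ := hg p hp.1
      by_cases e : g p = a
      · exact Finset.mem_union_left _ (Finset.mem_filter.2 ⟨hp.1, e⟩)
      · refine Finset.mem_union_right _ (Finset.mem_biUnion.2 ⟨g p, Finset.mem_erase.2 ⟨e, hgR⟩, ?_⟩)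
        exact Finset.mem_filter.2 ⟨hp.1, hp.2, hgon⟩
    refine (Finset.card_le_card hsub).trans ((Finset.card_union_le _ _).trans
      (Nat.add_le_add_left ?_ _))
    refine (Finset.card_biUnion_le_card_mul _ _ s fun c hc => ?_).trans
        (Nat.mul_le_mul_right _ (Finset.card_le_card (Finset.erase_subset _ _)))
    rw [Finset.mem_erase] at hc
    exact ps_common_points F P1 s a c (hI a ha c (hR hc.2) hc.1.symm)
  refine (Finset.sum_le_sum h1).trans ?_
  rw [Finset.sum_add_distrib, Finset.sum_const, smul_eq_mul]
  have h2 : ∑ a ∈ A, (P1.filter (fun p => g p = a)).card ≤ P.card := by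
    rw [← Finset.card_eq_sum_card_fiberwise (fun p hp => hR (hg p hp).1)]
    exact Finset.card_filter_le _ _
  calc _ ≤ P.card + A.card * (R.card * s) := Nat.add_le_add_right h2 _
    _ = _ := by ring

def PSSent (b : Bool) : PSArc where
  l := ⊥
  u := ⊤
  φ := fun _ => if b then ⊤ else ⊥
  cont := fun _ _ _ => continuousAt_const

def PSHat (F : ι → PSArc) : Bool ⊕ ι → PSArc
  | Sum.inl b => PSSent b
  | Sum.inr a => F a

def PSHatR (R : Finset ι) : Finset (Bool ⊕ ι) := (Finset.univ : Finset Bool).disjSum R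

lemma psHat_bot (F : ι → PSArc) (R : Finset ι) :
    ∃ b ∈ PSHatR R, ∀ x, (PSHat F b).Dom x ∧ (PSHat F b).φ x = ⊥ :=
  ⟨Sum.inl false, by simp [PSHatR], fun x =>
    ⟨⟨EReal.bot_lt_coe _, EReal.coe_lt_top _⟩, by simp [PSHat, PSSent]⟩⟩

lemma psHat_top (F : ι → PSArc) (R : Finset ι) :
    ∃ b ∈ PSHatR R, ∀ x, (PSHat F b).Dom x ∧ (PSHat F b).φ x = ⊤ :=
  ⟨Sum.inl true, by simp [PSHatR], fun x =>
    ⟨⟨EReal.bot_lt_coe _, EReal.coe_lt_top _⟩, by simp [PSHat, PSSent]⟩⟩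

lemma psHat_off (F : ι → PSArc) (R : Finset ι) (p : Fin 2 → ℝ) :
    PSOff (PSHat F) (PSHatR R) p ↔ PSOff F R p := by
  constructor
  · intro h a ha hon
    exact h (Sum.inr a) (by simp [PSHatR, ha]) hon
  · intro h a ha hon
    rcases a with b | a
    · have := hon.2
      cases b <;> simp [PSHat, PSSent] at this
    · exact h a (by simpa [PSHatR] using ha) hon

lemma ps_arcs_param (F : ι → PSArc) (P : Finset (Fin 2 → ℝ)) (A : Finset ι) (K s r : ℕ)
    (hreal : ∀ a ∈ A, ∀ x, (F a).Dom x → (F a).φ x ≠ ⊥ ∧ (F a).φ x ≠ ⊤)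
    (hI : ∀ a ∈ A, ∀ c ∈ A, a ≠ c →
      {x : ℝ | (F a).Dom x ∧ (F c).Dom x ∧ (F a).φ x = (F c).φ x}.Finite ∧
      {x : ℝ | (F a).Dom x ∧ (F c).Dom x ∧ (F a).φ x = (F c).φ x}.ncard ≤ s)
    (hk : ∀ pts : Finset (Fin 2 → ℝ), pts.card = K + 1 →
      (A.filter (fun a => ∀ p ∈ pts, PSOn F a p)).card ≤ s)
    (lam : ℝ) (hlam : 0 < lam) :
    (∑ a ∈ A, ((P.filter (PSOn F a)).card : ℝ)) ≤
      P.card + s * r * A.card + K * (64 * (4 * (s + 2) * (r + 3) ^ 2) * A.card / (r + 1))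
        + 64 * P.card * A.card / ((r + 1) * lam) + s * lam ^ K * P.card := by
  have hsplit : ∀ R : Finset ι, (∑ a ∈ A, ((P.filter (PSOn F a)).card : ℝ)) =
      (∑ a ∈ A, (((P.filter (fun p => ¬ PSOff F R p)).filter (PSOn F a)).card : ℝ)) +
      ∑ a ∈ A, (((P.filter (fun p => PSOff F R p)).filter (PSOn F a)).card : ℝ) := by
    intro R
    rw [← Finset.sum_add_distrib]
    refine Finset.sum_congr rfl fun a _ => ?_
    have h := Finset.card_filter_add_card_filter_not (s := P.filter (PSOn F a))
      (fun p => PSOff F R p)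
    rw [Finset.filter_comm, Finset.filter_comm (p := PSOn F a) (q := fun p => ¬ PSOff F R p)] at h
    rw [← h]
    push_cast
    ring
  rcases Nat.eq_zero_or_pos P.card with hm | hm
  · rw [Finset.card_eq_zero] at hm
    subst hm
    simp
    positivity
  rcases le_or_gt A.card r with hrA | hrA
  · have h1 := ps_on_R F P A A subset_rfl s hI
    have h2 : ∑ a ∈ A, (((P.filter (fun p => PSOff F A p)).filter (PSOn F a)).card : ℝ) = 0 := by
      refine Finset.sum_eq_zero fun a ha => ?_
      rw [Nat.cast_eq_zero, Finset.card_eq_zero, Finset.filter_eq_empty_iff]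
      intro p hp
      exact (Finset.mem_filter.1 hp).2 a ha
    rw [hsplit A, h2, add_zero]
    have h3 : (∑ a ∈ A, (((P.filter (fun p => ¬ PSOff F A p)).filter (PSOn F a)).card : ℝ)) ≤
        P.card + s * A.card * A.card := by exact_mod_cast h1
    have h4 : (s : ℝ) * A.card * A.card ≤ s * r * A.card := by gcongr
    have h5 : 0 ≤ (K:ℝ) * (64 * (4 * (s + 2) * (r + 3) ^ 2) * A.card / (r + 1))
        + 64 * P.card * A.card / ((r + 1) * lam) + s * lam ^ K * P.card := by positivity
    linarith
  set T : Finset ι → Finset (Finset (Fin 2 → ℝ)) := fun R => PSCells (PSHat F) P (PSHatR R) with hT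
  set Q : ℕ := 4 * (s + 2) * (r + 3) ^ 2 with hQ
  have hcard : ∀ R ⊆ A, R.card ≤ r + 1 → (T R).card ≤ Q := by
    intro R hR hRr
    have hh := ps_cells_card (F := PSHat F) P (PSHatR R) s (psHat_bot F R) (psHat_top F R) ?_
    · refine hh.trans ?_
      have : (PSHatR R).card ≤ r + 3 := by
        rw [PSHatR, Finset.card_disjSum]
        simp
        omega
      rw [hQ]
      gcongr
    · have hempty : ∀ S : Set ℝ, S = ∅ → S.Finite ∧ S.ncard ≤ s := by
        rintro S rfl; simp
      intro a ha c hc hac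
      rcases a with a | a <;> rcases c with c | c
      · apply hempty
        ext x
        have : a ≠ c := fun h => hac (by rw [h])
        cases a <;> cases c <;> simp [PSHat, PSSent] at this ⊢
      · apply hempty
        ext x
        simp only [Set.mem_ofPred_eq, Set.mem_empty_iff_false, iff_false]
        rintro ⟨-, h2, h3⟩
        have hcA : c ∈ A := hR (by simpa [PSHatR] using hc)
        have := hreal c hcA x h2
        cases a <;> simp [PSHat, PSSent] at h3
        · exact this.1 h3.symm
        · exact this.2 h3.symm
      · apply hempty
        ext x
        simp only [Set.mem_ofPred_eq, Set.mem_empty_iff_false, iff_false]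
        rintro ⟨h2, -, h3⟩
        have hcA : a ∈ A := hR (by simpa [PSHatR] using ha)
        have := hreal a hcA x h2
        cases c <;> simp [PSHat, PSSent] at h3
        · exact this.1 h3
        · exact this.2 h3
      · have haA : a ∈ A := hR (by simpa [PSHatR] using ha)
        have hcA : c ∈ A := hR (by simpa [PSHatR] using hc)
        exact hI a haA c hcA (fun h => hac (by rw [h]))
  obtain ⟨R, hRA, hRr, hsamp⟩ := ps_sampling A T (fun a p => PSOn F a p)
    (fun Δ => Q * Δ.card + P.card) (2 * Q * P.card) r
    (by
      intro R hR Δ hΔ a ha p hp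
      exact (psHat_off F R p).1 (ps_cells_off hΔ hp) a ha)
    (by
      intro R hR Δ hΔ
      obtain ⟨D, hD, hDc, hst⟩ := ps_cells_stable (psHat_bot F R) (psHat_top F R) hΔ
      refine ⟨D.toRight, ?_, Finset.card_toRight_le.trans hDc, ?_⟩
      · intro a ha
        rw [Finset.mem_toRight] at ha
        simpa [PSHatR] using hD ha
      · intro R' h1 h2
        refine hst _ ?_ ?_
        · intro z hz
          rcases z with z | z
          · simp [PSHatR]
          · simpa [PSHatR] using h1 (Finset.mem_toRight.2 hz)
        · exact Finset.disjSum_mono subset_rfl h2)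
    (by
      intro R hR hRr
      rw [Finset.sum_add_distrib, ← Finset.mul_sum, Finset.sum_const, smul_eq_mul]
      have h1 : ∑ Δ ∈ T R, Δ.card ≤ P.card := ps_cells_sum P _
      have h2 := hcard R hR hRr
      calc _ ≤ Q * P.card + Q * P.card := by gcongr
        _ = _ := by ring)
    hrA
  set n : Finset (Fin 2 → ℝ) → ℕ :=
    fun Δ => (A.filter (fun a => ∃ p ∈ Δ, PSOn F a p)).card with hn
  have hQpos : 0 < Q := by positivity
  have s1 : (∑ Δ ∈ T R, Δ.card * n Δ) * (r + 1) ≤ 64 * P.card * A.card := by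
    have : Q * ((∑ Δ ∈ T R, Δ.card * n Δ) * (r + 1)) ≤ Q * (64 * P.card * A.card) := by
      calc _ = (∑ Δ ∈ T R, (Q * Δ.card) * n Δ) * (r + 1) := by
            rw [← mul_assoc, Finset.mul_sum]
            simp_rw [mul_assoc]
        _ ≤ (∑ Δ ∈ T R, (Q * Δ.card + P.card) * n Δ) * (r + 1) := by
            gcongr; omega
        _ ≤ _ := hsamp
        _ = _ := by ring
    exact Nat.le_of_mul_le_mul_left this hQpos
  have s2 : (∑ Δ ∈ T R, n Δ) * (r + 1) ≤ 64 * Q * A.card := by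
    have : P.card * ((∑ Δ ∈ T R, n Δ) * (r + 1)) ≤ P.card * (64 * Q * A.card) := by
      calc _ = (∑ Δ ∈ T R, P.card * n Δ) * (r + 1) := by
            rw [← mul_assoc, Finset.mul_sum]
        _ ≤ (∑ Δ ∈ T R, (Q * Δ.card + P.card) * n Δ) * (r + 1) := by
            gcongr; omega
        _ ≤ _ := hsamp
        _ = _ := by ring
    exact Nat.le_of_mul_le_mul_left this hm
  have hoffsum : ∑ a ∈ A, (((P.filter (fun p => PSOff F R p)).filter (PSOn F a)).card : ℝ) ≤
      ∑ Δ ∈ T R, ((K:ℝ) * n Δ + n Δ * Δ.card / lam + s * Δ.card * lam ^ K) := by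
    calc _ ≤ ∑ a ∈ A, ∑ Δ ∈ T R, ((Δ.filter (PSOn F a)).card : ℝ) := by
          refine Finset.sum_le_sum fun a _ => ?_
          have : (P.filter (fun p => PSOff F R p)).filter (PSOn F a) ⊆
              (T R).biUnion (fun Δ => Δ.filter (PSOn F a)) := by
            intro p hp
            simp only [Finset.mem_filter] at hp
            obtain ⟨Δ, hΔ, hpΔ⟩ := ps_cells_cover hp.1.1 ((psHat_off F R p).2 hp.1.2)
            exact Finset.mem_biUnion.2 ⟨Δ, hΔ, Finset.mem_filter.2 ⟨hpΔ, hp.2⟩⟩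
          exact_mod_cast (Finset.card_le_card this).trans Finset.card_biUnion_le
      _ = ∑ Δ ∈ T R, ∑ a ∈ A, ((Δ.filter (PSOn F a)).card : ℝ) := Finset.sum_comm
      _ ≤ _ := by
          refine Finset.sum_le_sum fun Δ hΔ => ?_
          have e : ∑ a ∈ A, ((Δ.filter (PSOn F a)).card : ℝ) =
              ∑ a ∈ A.filter (fun a => ∃ p ∈ Δ, PSOn F a p), ((Δ.filter (PSOn F a)).card : ℝ) := by
            refine (Finset.sum_filter_of_ne ?_).symm
            intro a ha hne
            rw [Nat.cast_ne_zero, Finset.card_ne_zero] at hne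
            obtain ⟨p, hp⟩ := hne
            rw [Finset.mem_filter] at hp
            exact ⟨p, hp⟩
          rw [e]
          refine ps_kst _ _ _ K s ?_ lam hlam
          intro pts _ hpts
          refine le_trans (Finset.card_le_card ?_) (hk pts hpts)
          exact Finset.filter_subset_filter _ (Finset.filter_subset _ _)
  have hon := ps_on_R F P A R hRA s hI
  rw [hRr] at hon
  have hon' : (∑ a ∈ A, (((P.filter (fun p => ¬ PSOff F R p)).filter (PSOn F a)).card : ℝ)) ≤
        P.card + s * r * A.card := by exact_mod_cast hon
  rw [hsplit R]
  have s1' : (∑ Δ ∈ T R, (Δ.card : ℝ) * n Δ) * (r + 1) ≤ 64 * P.card * A.card := by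
    exact_mod_cast s1
  have s2' : (∑ Δ ∈ T R, (n Δ : ℝ)) * (r + 1) ≤ 64 * Q * A.card := by exact_mod_cast s2
  have s3' : (∑ Δ ∈ T R, (Δ.card : ℝ)) ≤ P.card := by
    have h1 : ∑ Δ ∈ T R, Δ.card ≤ P.card := ps_cells_sum P _
    exact_mod_cast h1
  have hr1 : (0:ℝ) < r + 1 := by positivity
  rw [← le_div_iff₀ hr1] at s1' s2'
  have hfin : ∑ Δ ∈ T R, ((K:ℝ) * n Δ + n Δ * Δ.card / lam + s * Δ.card * lam ^ K) =
      K * (∑ Δ ∈ T R, (n Δ : ℝ)) + (∑ Δ ∈ T R, (Δ.card : ℝ) * n Δ) / lam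
        + s * lam ^ K * (∑ Δ ∈ T R, (Δ.card : ℝ)) := by
    rw [Finset.sum_add_distrib, Finset.sum_add_distrib, Finset.mul_sum, Finset.sum_div,
      Finset.mul_sum]
    congr 1
    · congr 1
      refine Finset.sum_congr rfl fun Δ _ => by ring
    · refine Finset.sum_congr rfl fun Δ _ => by ring
  have t1 : (K:ℝ) * (∑ Δ ∈ T R, (n Δ : ℝ)) ≤ K * (64 * Q * A.card / (r + 1)) := by gcongr
  have t2 : (∑ Δ ∈ T R, (Δ.card : ℝ) * n Δ) / lam ≤
      64 * P.card * A.card / ((r + 1) * lam) := by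
    rw [← div_div]; gcongr
  have t3 : s * lam ^ K * (∑ Δ ∈ T R, (Δ.card : ℝ)) ≤ s * lam ^ K * P.card := by gcongr
  have hQr : (Q : ℝ) = 4 * (s + 2) * (r + 3) ^ 2 := by rw [hQ]; push_cast; ring
  rw [hQr] at t1
  linarith
end
end


lemma ps_opt (K : ℕ) (m N u v M : ℝ) (hu : 0 < u) (hv : 0 < v)
    (hm : m = u ^ (2 * K + 1)) (hN : N = v ^ (2 * K + 1)) (hM : M = u ^ (K + 1) * v ^ (2 * K)) :
    ∃ (r : ℕ) (lam : ℝ), 0 < lam ∧ (r + 1) * N ≤ M + 2 * N ∧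
      lam ^ K * m = M ∧ m * N / ((r + 1) * lam) ≤ M := by
  have hNpos : 0 < N := by rw [hN]; positivity
  have hMpos : 0 < M := by rw [hM]; positivity
  have hmpos : 0 < m := by rw [hm]; positivity
  refine ⟨⌈M / N⌉₊, v ^ 2 / u, by positivity, ?_, ?_, ?_⟩
  · have := (Nat.ceil_lt_add_one (show 0 ≤ M / N by positivity)).le
    calc _ ≤ ((M / N + 1) + 1) * N := by gcongr
      _ = _ := by field_simp; ring
  · rw [hm, hM, div_pow]
    field_simp
    ring
  · have h1 : M / N ≤ ⌈M / N⌉₊ + 1 := (Nat.le_ceil _).trans (by linarith)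
    calc _ ≤ m * N / ((M / N) * (v ^ 2 / u)) := by gcongr
      _ = M := by
        rw [hm, hN, hM]
        field_simp
        ring

variable {ι : Type*}

lemma ps_arcs (K s : ℕ) : ∃ c : ℝ, 0 < c ∧
    ∀ (F : ι → PSArc) (P : Finset (Fin 2 → ℝ)) (A : Finset ι)
    (_ : ∀ a ∈ A, ∀ x, (F a).Dom x → (F a).φ x ≠ ⊥ ∧ (F a).φ x ≠ ⊤)
    (_ : ∀ a ∈ A, ∀ c ∈ A, a ≠ c →
      {x : ℝ | (F a).Dom x ∧ (F c).Dom x ∧ (F a).φ x = (F c).φ x}.Finite ∧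
      {x : ℝ | (F a).Dom x ∧ (F c).Dom x ∧ (F a).φ x = (F c).φ x}.ncard ≤ s)
    (_ : ∀ pts : Finset (Fin 2 → ℝ), pts.card = K + 1 →
      (A.filter (fun a => ∀ p ∈ pts, PSOn F a p)).card ≤ s),
    (∑ a ∈ A, ((P.filter (PSOn F a)).card : ℝ)) ≤
      c * ((P.card : ℝ) ^ (((K : ℝ) + 1) / (2 * K + 1)) * (A.card : ℝ) ^ ((2 * K : ℝ) / (2 * K + 1))
        + P.card + A.card) := by
  refine ⟨1 + s * 2 + K * (64 * (4 * (s + 2) * 9)) * 2 + 64 + s, by positivity, ?_⟩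
  intro F P A h1 h2 h3
  set m : ℝ := ((P.card : ℕ) : ℝ) with hm
  set N : ℝ := ((A.card : ℕ) : ℝ) with hN
  have hm0 : 0 ≤ m := by positivity
  have hN0 : 0 ≤ N := by positivity
  set M : ℝ := m ^ (((K : ℝ) + 1) / (2 * K + 1)) * N ^ ((2 * K : ℝ) / (2 * K + 1)) with hM
  have hM0 : 0 ≤ M := by positivity
  rcases Nat.eq_zero_or_pos P.card with h0 | hmpos
  · rw [Finset.card_eq_zero] at h0
    have : (∑ a ∈ A, ((P.filter (PSOn F a)).card : ℝ)) = 0 := by subst h0; simp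
    rw [this]
    positivity
  rcases Nat.eq_zero_or_pos A.card with h0 | hNpos
  · rw [Finset.card_eq_zero] at h0
    have : (∑ a ∈ A, ((P.filter (PSOn F a)).card : ℝ)) = 0 := by subst h0; simp
    rw [this]
    positivity
  have hmp : 0 < m := by rw [hm]; exact_mod_cast hmpos
  have hNp : 0 < N := by rw [hN]; exact_mod_cast hNpos
  clear_value m N M
  have hpw : ∀ y : ℝ, 0 < y → ∀ j : ℕ, (y ^ ((1 : ℝ) / (2 * K + 1))) ^ j = y ^ ((j : ℝ) / (2 * K + 1)) := by
    intro y hy j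
    rw [← Real.rpow_natCast, ← Real.rpow_mul hy.le]
    congr 1
    ring
  have hone : ∀ y : ℝ, 0 < y → y = (y ^ ((1 : ℝ) / (2 * K + 1))) ^ (2 * K + 1) := by
    intro y hy
    rw [hpw y hy]
    push_cast
    rw [div_self (by positivity), Real.rpow_one]
  obtain ⟨r, lam, hlam, o1, o2, o3⟩ := ps_opt K m N (m ^ ((1 : ℝ) / (2 * K + 1)))
    (N ^ ((1 : ℝ) / (2 * K + 1))) M (by positivity) (by positivity) (hone m hmp) (hone N hNp)
    (by rw [hpw m hmp, hpw N hNp, hM]; push_cast; rfl)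
  refine (ps_arcs_param F P A K s r h1 h2 h3 lam hlam).trans ?_
  rw [← hm, ← hN]
  have b1 : (s:ℝ) * r * N ≤ s * 2 * (M + m + N) := by
    have : (s : ℝ) * (r * N) ≤ s * (2 * (M + m + N)) := by
      refine mul_le_mul_of_nonneg_left ?_ (by positivity)
      linarith
    linarith
  have b2 : (K:ℝ) * (64 * (4 * (s + 2) * (r + 3) ^ 2) * N / (r + 1)) ≤
      K * (64 * (4 * (s + 2) * 9)) * 2 * (M + m + N) := by
    have q : ((r:ℝ) + 3) ^ 2 ≤ 9 * (r + 1) * (r + 1) := by nlinarith [show (0:ℝ) ≤ r by positivity]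
    calc (K:ℝ) * (64 * (4 * (s + 2) * (r + 3) ^ 2) * N / (r + 1))
        ≤ (K:ℝ) * (64 * (4 * (s + 2) * (9 * (r + 1) * (r + 1))) * N / (r + 1)) := by gcongr
      _ = K * (64 * (4 * (s + 2) * 9)) * ((r + 1) * N) := by field_simp
      _ ≤ K * (64 * (4 * (s + 2) * 9)) * (2 * (M + m + N)) := by
          refine mul_le_mul_of_nonneg_left ?_ (by positivity)
          linarith
      _ = _ := by ring
  have b3 : 64 * m * N / ((r + 1) * lam) ≤ 64 * (M + m + N) := by
    have : 64 * m * N / ((r + 1) * lam) = 64 * (m * N / ((r + 1) * lam)) := by ring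
    rw [this]; linarith
  have b4 : s * lam ^ K * m ≤ s * (M + m + N) := by
    rw [mul_assoc, o2]; gcongr; linarith
  linarith

open Polynomial in
lemma ps_fraction_squarefree (G : ℝ[X][X]) (hG : G ≠ 0) (hsq : Squarefree G) :
    Squarefree (G.map (algebraMap ℝ[X] (FractionRing ℝ[X]))) := by
  let _ : NormalizedGCDMonoid ℝ[X] := UniqueFactorizationMonoid.toNormalizedGCDMonoid ℝ[X]
  set K := FractionRing ℝ[X]
  have hinj : Function.Injective (algebraMap ℝ[X] K) := IsFractionRing.injective _ _
  intro Q hQ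
  have hGK : G.map (algebraMap ℝ[X] K) ≠ 0 := (Polynomial.map_ne_zero_iff hinj).2 hG
  have hQ0 : Q ≠ 0 := by
    rintro rfl
    apply hGK
    simpa using hQ
  obtain ⟨b, hb⟩ := IsLocalization.integerNormalization_map_to_map (nonZeroDivisors ℝ[X]) Q
  set q0 := IsLocalization.integerNormalization (nonZeroDivisors ℝ[X]) Q with hq0
  have hq00 : q0 ≠ 0 := by
    intro h
    exact hQ0 ((IsFractionRing.integerNormalization_eq_zero_iff).1 h)
  set q := q0.primPart with hq
  have hprim : q.IsPrimitive := q0.isPrimitive_primPart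
  have hb0 : algebraMap ℝ[X] K b ≠ 0 := by
    intro h
    exact nonZeroDivisors.coe_ne_zero b (hinj (by rw [h, map_zero]))
  have hcont : algebraMap ℝ[X] K q0.content ≠ 0 := by
    intro h
    have := hinj (h.trans (map_zero _).symm)
    exact hq00 (Polynomial.content_eq_zero_iff.1 this)
  have hunit : ∀ z : K, z ≠ 0 → IsUnit (C z : K[X]) := fun z hz => by
    rw [Polynomial.isUnit_C]; exact hz.isUnit
  have hassoc : Associated (q.map (algebraMap ℝ[X] K)) Q := by
    have h1 : C (algebraMap ℝ[X] K q0.content) * q.map (algebraMap ℝ[X] K) =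
        C (algebraMap ℝ[X] K b) * Q := by
      have := congrArg (Polynomial.map (algebraMap ℝ[X] K)) q0.eq_C_content_mul_primPart
      rw [Polynomial.map_mul, Polynomial.map_C] at this
      rw [← this, hb, Algebra.smul_def]
      rfl
    have a1 : Associated (C (algebraMap ℝ[X] K q0.content) * q.map (algebraMap ℝ[X] K))
        (q.map (algebraMap ℝ[X] K)) := associated_unit_mul_left _ _ (hunit _ hcont)
    have a2 : Associated (C (algebraMap ℝ[X] K b) * Q) Q :=
      associated_unit_mul_left _ _ (hunit _ hb0)
    exact a1.symm.trans (h1 ▸ a2)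
  have hdvd : (q * q).map (algebraMap ℝ[X] K) ∣ G.map (algebraMap ℝ[X] K) := by
    rw [Polynomial.map_mul]
    exact ((hassoc.mul_mul hassoc).dvd).trans hQ
  have hd3 : q * q ∣ G :=
    Polynomial.IsPrimitive.dvd_of_fraction_map_dvd_fraction_map (hprim.mul hprim) hdvd
  have hu := hsq q hd3
  exact hassoc.isUnit_iff.1 (hu.map (Polynomial.mapRingHom (algebraMap ℝ[X] K)))

open Polynomial in
lemma ps_resultant_ne (G : ℝ[X][X]) (hG : G ≠ 0) (hsq : Squarefree G) :
    resultant G (derivative G) ≠ 0 := by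
  have hsqK := ps_fraction_squarefree G hG hsq
  set K := FractionRing ℝ[X]
  have hinj : Function.Injective (algebraMap ℝ[X] K) := IsFractionRing.injective _ _
  intro h
  have h1 := resultant_map_map G (derivative G) G.natDegree (derivative G).natDegree
    (algebraMap ℝ[X] K)
  rw [h, map_zero, ← Polynomial.natDegree_map_eq_of_injective hinj G,
    ← Polynomial.natDegree_map_eq_of_injective hinj (derivative G), ← Polynomial.derivative_map] at h1
  have h2 := (resultant_eq_zero_iff.1 h1).2
  have : CharZero K := charZero_of_injective_algebraMap hinj
  have h3 : (G.map (algebraMap ℝ[X] K)).Separable := PerfectField.separable_iff_squarefree.2 hsqK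
  exact h2 h3

open Polynomial in
lemma ps_det_natDegree {n : ℕ} (M : Matrix (Fin n) (Fin n) ℝ[X]) (E : ℕ)
    (h : ∀ i j, (M i j).natDegree ≤ E) : M.det.natDegree ≤ n * E := by
  rw [Matrix.det_apply]
  refine natDegree_sum_le_of_forall_le _ _ fun σ _ => ?_
  refine (natDegree_smul_le _ _).trans ?_
  refine (natDegree_prod_le _ _).trans ?_
  refine (Finset.sum_le_card_nsmul _ _ E fun i _ => h _ _).trans ?_
  simp

open Polynomial in
lemma ps_disc (E : ℕ) (G : ℝ[X][X]) (hG : G ≠ 0) (hsq : Squarefree G) (hd : G.natDegree ≤ E)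
    (hc : ∀ j, (G.coeff j).natDegree ≤ E) :
    ∃ D : ℝ[X], D ≠ 0 ∧ D.natDegree ≤ 2 * E * E + E ∧ ∀ x, D.eval x ≠ 0 →
      G.leadingCoeff.eval x ≠ 0 ∧
      ∀ y, evalEval x y G = 0 → evalEval x y (derivative G) ≠ 0 := by
  have hlc : G.leadingCoeff ≠ 0 := leadingCoeff_ne_zero.2 hG
  rcases Nat.eq_zero_or_pos G.natDegree with h0 | hpos
  · refine ⟨G.leadingCoeff, hlc, (hc _).trans (by omega), fun x hx => ⟨hx, fun y hy => ?_⟩⟩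
    exfalso
    rw [eq_C_of_natDegree_eq_zero h0] at hy hx
    rw [evalEval_C] at hy
    rw [leadingCoeff_C] at hx
    exact hx hy
  · have hres := ps_resultant_ne G hG hsq
    refine ⟨resultant G (derivative G) * G.leadingCoeff, mul_ne_zero hres hlc, ?_, ?_⟩
    · refine natDegree_mul_le.trans (add_le_add ?_ (hc _))
      refine (ps_det_natDegree _ E ?_).trans ?_
      · intro i j
        have hc' : ∀ j, ((derivative G).coeff j).natDegree ≤ E := by
          intro j
          rw [coeff_derivative]
          refine natDegree_mul_le.trans ?_
          have : ((j : ℝ[X]) + 1).natDegree = 0 := by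
            rw [← Nat.cast_succ]; exact natDegree_natCast _
          rw [this, add_zero]; exact hc _
        unfold sylvester
        rw [Matrix.of_apply]
        refine Fin.addCases (fun j => ?_) (fun j => ?_) j
        · rw [Fin.addCases_left]
          split_ifs
          · exact hc' _
          · simp
        · rw [Fin.addCases_right]
          split_ifs
          · exact hc _
          · simp
      · have : (derivative G).natDegree ≤ E := (natDegree_derivative_le G).trans (by omega)
        gcongr
        omega
    · intro x hx
      rw [eval_mul] at hx
      refine ⟨right_ne_zero_of_mul hx, fun y hy hy' => left_ne_zero_of_mul hx ?_⟩
      obtain ⟨p, q, -, -, hpq⟩ := exists_mul_add_mul_eq_C_resultant G (derivative G) le_rfl le_rfl (Or.inl hpos.ne')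
      have := congrArg (evalEval x y) hpq
      rw [evalEval_add, evalEval_mul, evalEval_mul, hy, hy', evalEval_C] at this
      simpa using this.symm

open Polynomial in
lemma ps_curve_poly (E : ℕ) (γ : Set (Fin 2 → ℝ)) (h : IsPlaneAlgCurve E γ) :
    ∃ G : ℝ[X][X], G ≠ 0 ∧ Squarefree G ∧ G.natDegree ≤ E ∧ (∀ j, (G.coeff j).natDegree ≤ E) ∧
      ∀ p, p ∈ γ ↔ evalEval (p 0) (p 1) G = 0 := by
  have hex : ∃ d : ℕ, ∃ f : MvPolynomial (Fin 2) ℝ, f ≠ 0 ∧ f.totalDegree = d ∧ γ = zeroSet f := by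
    obtain ⟨f, h1, h2, h3⟩ := h
    exact ⟨_, f, h1, rfl, h3⟩
  obtain ⟨f, hf0, hfd, hfγ⟩ := Nat.find_spec hex
  have hmin : ∀ g : MvPolynomial (Fin 2) ℝ, g ≠ 0 → γ = zeroSet g → f.totalDegree ≤ g.totalDegree := by
    intro g h1 h2
    rw [hfd]
    exact Nat.find_min' hex ⟨g, h1, rfl, h2⟩
  have hfE : f.totalDegree ≤ E := by
    obtain ⟨g, h1, h2, h3⟩ := h
    exact (hmin g h1 h3).trans h2
  have hsq : Squarefree f := by
    rintro q ⟨h, rfl⟩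
    have hq : q ≠ 0 := by rintro rfl; simp at hf0
    have hh : h ≠ 0 := by rintro rfl; simp at hf0
    have h1 := hmin (q * h) (mul_ne_zero hq hh) (by
      rw [hfγ]
      ext x
      simp [zeroSet])
    rw [mul_assoc, MvPolynomial.totalDegree_mul_of_isDomain hq (mul_ne_zero hq hh)] at h1
    have h2 : q.totalDegree = 0 := by omega
    rw [MvPolynomial.totalDegree_eq_zero_iff_eq_C] at h2
    rw [h2]
    refine IsUnit.map MvPolynomial.C ?_
    rw [isUnit_iff_ne_zero]
    intro h3
    rw [h3] at h2
    exact hq (by simpa using h2)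
  set e := Polynomial.Bivariate.equivMvPolynomial ℝ
  have hmon : ∀ (m : Fin 2 →₀ ℕ) (a : ℝ), e.symm (MvPolynomial.monomial m a) =
      C (C a * X ^ (m 0)) * X ^ (m 1) := by
    intro m a
    rw [MvPolynomial.monomial_eq, Finsupp.prod_fintype _ _ (by simp)]
    simp [e, Fin.prod_univ_two, mul_assoc]
  have hsum : e.symm f = ∑ m ∈ f.support, C (C (f.coeff m) * X ^ (m 0)) * X ^ (m 1) := by
    conv_lhs => rw [f.as_sum]
    rw [map_sum]
    exact Finset.sum_congr rfl fun m _ => hmon m _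
  have hle : ∀ m ∈ f.support, m 0 + m 1 ≤ E := by
    intro m hm
    have := MvPolynomial.le_totalDegree hm
    rw [Finsupp.sum_fintype _ _ (by simp), Fin.sum_univ_two] at this
    exact this.trans hfE
  refine ⟨e.symm f, ?_, ?_, ?_, ?_, ?_⟩
  · simpa using hf0
  · rintro q ⟨h, hq⟩
    have : e q * e q ∣ f := ⟨e h, by rw [← map_mul, ← map_mul, ← hq]; simp⟩
    simpa using (hsq _ this).map e.symm
  · rw [hsum]
    refine natDegree_sum_le_of_forall_le _ _ fun m hm => ?_
    refine (natDegree_C_mul_X_pow_le _ _).trans ?_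
    have := hle m hm
    omega
  · intro j
    rw [hsum, finsetSum_coeff]
    refine natDegree_sum_le_of_forall_le _ _ fun m hm => ?_
    rw [coeff_C_mul_X_pow]
    have := hle m hm
    split_ifs
    · refine (natDegree_C_mul_X_pow_le _ _).trans ?_
      omega
    · simp
  · intro p
    rw [hfγ]
    have : evalEval (p 0) (p 1) (e.symm f) = MvPolynomial.eval p f := by
      rw [hsum, MvPolynomial.eval_eq']
      refine (map_sum (evalEvalRingHom (p 0) (p 1)) _ _).trans ?_
      refine Finset.sum_congr rfl fun m _ => ?_
      simp [coe_evalEvalRingHom, Fin.prod_univ_two, evalEval_mul, evalEval_pow, evalEval_C, mul_assoc]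
    rw [this]
    rfl


def psNth (T : Finset ℝ) (i : ℕ) : ℝ := if h : i < T.card then T.orderEmbOfFin rfl ⟨i, h⟩ else 0

lemma psNth_eq (T : Finset ℝ) (i k : ℕ) (hk : T.card = k) (h : i < k) :
    psNth T i = T.orderEmbOfFin hk ⟨i, h⟩ := by
  subst hk
  rw [psNth, dif_pos h]

lemma psNth_mem (T : Finset ℝ) (i : ℕ) (h : i < T.card) : psNth T i ∈ T := by
  rw [psNth_eq T i _ rfl h]; exact Finset.orderEmbOfFin_mem _ _ _

lemma psNth_surj (T : Finset ℝ) (y : ℝ) (hy : y ∈ T) : ∃ i < T.card, psNth T i = y := by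
  have : y ∈ Set.range (T.orderEmbOfFin rfl) := by
    rw [Finset.range_orderEmbOfFin]; exact hy
  obtain ⟨⟨i, hi⟩, h⟩ := this
  exact ⟨i, hi, by rw [psNth_eq T i _ rfl hi, h]⟩

lemma psNth_inj (T : Finset ℝ) (i j : ℕ) (hi : i < T.card) (hj : j < T.card)
    (h : psNth T i = psNth T j) : i = j := by
  rw [psNth_eq T i _ rfl hi, psNth_eq T j _ rfl hj] at h
  have := (T.orderEmbOfFin rfl).injective h
  simpa using this

lemma psNth_map (T T' : Finset ℝ) (g : ℝ → ℝ) (hg : ∀ y ∈ T, g y ∈ T') (hm : StrictMonoOn g T)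
    (hc : T'.card = T.card) (i : ℕ) (hi : i < T.card) : psNth T' i = g (psNth T i) := by
  have := Finset.orderEmbOfFin_unique (s := T') hc (f := fun j => g (T.orderEmbOfFin rfl j))
    (fun j => hg _ (Finset.orderEmbOfFin_mem _ _ _))
    (fun a b hab => hm (Finset.orderEmbOfFin_mem _ _ _) (Finset.orderEmbOfFin_mem _ _ _)
      ((T.orderEmbOfFin rfl).strictMono hab))
  rw [psNth_eq T' i _ hc hi, psNth_eq T i _ rfl hi, ← this]

open Filter Topology in
lemma ps_sel (S : ℝ → Finset ℝ) (x0 : ℝ)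
    (H1 : ∀ ε > 0, ∀ y ∈ S x0, ∀ᶠ x in 𝓝 x0, ∃ y' ∈ S x, |y' - y| < ε)
    (H2 : ∀ y ∈ S x0, ∃ ε > 0, ∀ᶠ x in 𝓝 x0, ∀ a ∈ S x, ∀ b ∈ S x, |a - y| < ε → |b - y| < ε → a = b)
    (H3 : ∀ ε > 0, ∀ᶠ x in 𝓝 x0, ∀ y' ∈ S x, ∃ y ∈ S x0, |y' - y| < ε) :
    (∀ᶠ x in 𝓝 x0, (S x).card = (S x0).card) ∧
      ∀ i < (S x0).card, ContinuousAt (fun x => psNth (S x) i) x0 := by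
  have key : ∀ ε > 0, ∀ᶠ x in 𝓝 x0, (S x).card = (S x0).card ∧
      ∀ i < (S x0).card, |psNth (S x) i - psNth (S x0) i| < ε := by
    intro ε hε
    have e1 : ∀ᶠ δ in 𝓝[>] (0:ℝ), ∀ y ∈ S x0, ∀ z ∈ S x0, y < z → 2 * δ < z - y := by
      rw [Filter.eventually_all_finset]
      intro y _
      rw [Filter.eventually_all_finset]
      intro z _
      by_cases h : y < z
      · have : ∀ᶠ δ in 𝓝[>] (0:ℝ), δ < (z - y) / 2 :=
          nhdsWithin_le_nhds (Iio_mem_nhds (by linarith))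
        filter_upwards [this] with δ hδ _
        linarith
      · exact Eventually.of_forall fun _ h' => absurd h' h
    have e2 : ∀ᶠ δ in 𝓝[>] (0:ℝ), ∀ y ∈ S x0, ∀ᶠ x in 𝓝 x0, ∀ a ∈ S x, ∀ b ∈ S x,
        |a - y| < δ → |b - y| < δ → a = b := by
      rw [Filter.eventually_all_finset]
      intro y hy
      obtain ⟨ε', h0, h⟩ := H2 y hy
      have : ∀ᶠ δ in 𝓝[>] (0:ℝ), δ < ε' := nhdsWithin_le_nhds (Iio_mem_nhds h0)
      filter_upwards [this] with δ hδ
      filter_upwards [h] with x hx a ha b hb h1 h2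
      exact hx a ha b hb (h1.trans hδ) (h2.trans hδ)
    have e3 : ∀ᶠ δ in 𝓝[>] (0:ℝ), δ < ε := nhdsWithin_le_nhds (Iio_mem_nhds hε)
    have e4 : ∀ᶠ δ in 𝓝[>] (0:ℝ), 0 < δ := self_mem_nhdsWithin
    obtain ⟨δ, h1, h2, h3, h4⟩ := (e1.and (e2.and (e3.and e4))).exists
    have k1 : ∀ᶠ x in 𝓝 x0, ∀ y ∈ S x0, ∃ y' ∈ S x, |y' - y| < δ :=
      (Filter.eventually_all_finset _).2 (H1 δ h4)
    have k2 : ∀ᶠ x in 𝓝 x0, ∀ y ∈ S x0, ∀ a ∈ S x, ∀ b ∈ S x,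
        |a - y| < δ → |b - y| < δ → a = b := (Filter.eventually_all_finset _).2 h2
    filter_upwards [k1, k2, H3 δ h4] with x hx1 hx2 hx3
    choose! g hg hgd using hx1
    have hm : StrictMonoOn g (S x0) := by
      intro y hy z hz hyz
      have a1 := abs_lt.1 (hgd y hy)
      have a2 := abs_lt.1 (hgd z hz)
      have a3 := h1 y hy z hz hyz
      linarith [a1.2, a2.1]
    have him : (S x0).image g = S x := by
      ext y'
      rw [Finset.mem_image]
      constructor
      · rintro ⟨y, hy, rfl⟩; exact hg y hy
      · intro hy'
        obtain ⟨y, hy, hd⟩ := hx3 y' hy'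
        exact ⟨y, hy, hx2 y hy _ (hg y hy) _ hy' (hgd y hy) hd⟩
    have hc : (S x).card = (S x0).card := by
      rw [← him, Finset.card_image_of_injOn hm.injOn]
    refine ⟨hc, fun i hi => ?_⟩
    rw [psNth_map (S x0) (S x) g hg hm hc i hi]
    exact (hgd _ (psNth_mem _ _ hi)).trans h3
  refine ⟨(key 1 one_pos).mono fun x hx => hx.1, fun i hi => ?_⟩
  rw [Metric.continuousAt_iff']
  intro ε hε
  filter_upwards [key ε hε] with x hx
  rw [Real.dist_eq]
  exact hx.2 i hi

open Filter Topology in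
lemma ps_H1 (F F' : ℝ → ℝ → ℝ) (hF : Continuous (fun p : ℝ × ℝ => F p.1 p.2))
    (hd : ∀ x y, HasDerivAt (F x) (F' x y) y) (x0 y : ℝ) (hy : F x0 y = 0) (hy' : F' x0 y ≠ 0)
    (ε : ℝ) (hε : 0 < ε) : ∀ᶠ x in 𝓝 x0, ∃ y', F x y' = 0 ∧ |y' - y| < ε := by
  have h1 := hasDerivAt_iff_tendsto_slope.1 (hd x0 y)
  have h2 : ∀ᶠ z in 𝓝[≠] y, 0 < slope (F x0) y z * F' x0 y := by
    have := h1.mul_const (F' x0 y)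
    exact this.eventually (lt_mem_nhds (mul_self_pos.2 hy'))
  have h3 : ∀ᶠ z in 𝓝[>] y, 0 < slope (F x0) y z * F' x0 y :=
    h2.filter_mono (nhdsWithin_mono _ fun z hz => ne_of_gt hz)
  have h4 : ∀ᶠ z in 𝓝[<] y, 0 < slope (F x0) y z * F' x0 y :=
    h2.filter_mono (nhdsWithin_mono _ fun z hz => ne_of_lt hz)
  have h5 : ∀ᶠ z in 𝓝[>] y, z < y + ε := nhdsWithin_le_nhds (Iio_mem_nhds (by linarith))
  have h6 : ∀ᶠ z in 𝓝[<] y, y - ε < z := nhdsWithin_le_nhds (Ioi_mem_nhds (by linarith))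
  obtain ⟨b, hb1, hb2, hb3⟩ := (h3.and (h5.and self_mem_nhdsWithin)).exists
  obtain ⟨a, ha1, ha2, ha3⟩ := (h4.and (h6.and self_mem_nhdsWithin)).exists
  have hb3 : y < b := hb3
  have ha3 : a < y := ha3
  rw [slope_def_field, hy, sub_zero] at hb1 ha1
  have hprod : F x0 a * F x0 b < 0 := by
    have k1 : 0 < F x0 b * F' x0 y := by
      have := mul_pos hb1 (sub_pos.2 hb3)
      rwa [div_mul_eq_mul_div, div_mul_cancel₀ _ (sub_pos.2 hb3).ne'] at this
    have k2 : F x0 a * F' x0 y < 0 := by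
      have := mul_neg_of_pos_of_neg ha1 (sub_neg.2 ha3)
      rwa [div_mul_eq_mul_div, div_mul_cancel₀ _ (sub_neg.2 ha3).ne] at this
    have k3 := mul_neg_of_pos_of_neg k1 k2
    have k4 : 0 < F' x0 y * F' x0 y := mul_self_pos.2 hy'
    by_contra hc
    push Not at hc
    nlinarith [mul_nonneg hc k4.le]
  have hca : Continuous fun x => F x a * F x b := by
    have c1 : Continuous fun x => F x a := hF.comp (by fun_prop : Continuous fun x : ℝ => (x, a))
    have c2 : Continuous fun x => F x b := hF.comp (by fun_prop : Continuous fun x : ℝ => (x, b))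
    exact c1.mul c2
  have hev : ∀ᶠ x in 𝓝 x0, F x a * F x b < 0 := hca.continuousAt.eventually (gt_mem_nhds hprod)
  filter_upwards [hev] with x hx
  have hcx : Continuous (F x) := continuous_iff_continuousAt.2 fun y => (hd x y).continuousAt
  have h0 : (0:ℝ) ∈ Set.uIcc (F x a) (F x b) := by
    rw [Set.mem_uIcc]
    rcases mul_neg_iff.1 hx with h | h
    · right; exact ⟨h.2.le, h.1.le⟩
    · left; exact ⟨h.1.le, h.2.le⟩
  obtain ⟨c, hc, hc0⟩ := intermediate_value_uIcc hcx.continuousOn h0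
  rw [Set.uIcc_of_le (by linarith)] at hc
  refine ⟨c, hc0, abs_lt.2 ⟨?_, ?_⟩⟩ <;> linarith [hc.1, hc.2]

open Filter Topology in
lemma ps_H2 (F F' : ℝ → ℝ → ℝ) (hF' : Continuous (fun p : ℝ × ℝ => F' p.1 p.2))
    (hd : ∀ x y, HasDerivAt (F x) (F' x y) y) (x0 y : ℝ) (hy' : F' x0 y ≠ 0) :
    ∃ ε > 0, ∀ᶠ x in 𝓝 x0, ∀ a b, F x a = 0 → F x b = 0 → |a - y| < ε → |b - y| < ε → a = b := by
  have h1 : ∀ᶠ p in 𝓝 (x0, y), F' p.1 p.2 ≠ 0 := hF'.continuousAt.eventually_ne hy'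
  rw [nhds_prod_eq, Filter.eventually_prod_iff] at h1
  obtain ⟨pa, ha, pb, hb, h⟩ := h1
  obtain ⟨ε, hε, hball⟩ := Metric.eventually_nhds_iff.1 hb
  refine ⟨ε, hε, ha.mono fun x hx => ?_⟩
  have key : ∀ a b, F x a = 0 → F x b = 0 → |a - y| < ε → |b - y| < ε → ¬ a < b := by
    intro a b h1 h2 h3 h4 hab
    obtain ⟨c, hc, hc0⟩ := exists_hasDerivAt_eq_zero (f := F x) (f' := F' x) hab
      (fun z _ => (hd x z).continuousAt.continuousWithinAt) (h1.trans h2.symm) (fun z _ => hd x z)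
    refine h hx (hball (y := c) ?_) hc0
    rw [Real.dist_eq]
    have := abs_lt.1 h3
    have := abs_lt.1 h4
    rw [abs_lt]
    constructor <;> linarith [hc.1, hc.2]
  intro a b h1 h2 h3 h4
  exact le_antisymm (not_lt.1 (key b a h2 h1 h4 h3)) (not_lt.1 (key a b h1 h2 h3 h4))

open Filter Topology in
lemma ps_H3 (F : ℝ → ℝ → ℝ) (hF : Continuous (fun p : ℝ × ℝ => F p.1 p.2)) (x0 M : ℝ)
    (hM : ∀ᶠ x in 𝓝 x0, ∀ y, F x y = 0 → |y| ≤ M) (ε : ℝ) (hε : 0 < ε) :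
    ∀ᶠ x in 𝓝 x0, ∀ y', F x y' = 0 → ∃ y, F x0 y = 0 ∧ |y' - y| < ε := by
  let K : Set ℝ := Set.Icc (-M) M \ ⋃ y ∈ {y | F x0 y = 0}, Metric.ball y ε
  have hK : IsCompact K := isCompact_Icc.diff (isOpen_biUnion fun _ _ => Metric.isOpen_ball)
  have h1 : ∀ᶠ x in 𝓝 x0, ∀ y ∈ K, F x y ≠ 0 := by
    refine hK.eventually_forall_of_forall_eventually fun y hy => ?_
    refine hF.continuousAt.eventually_ne (x := (x0, y)) ?_
    intro h0
    exact hy.2 (Set.mem_biUnion (show y ∈ {y | F x0 y = 0} from h0) (Metric.mem_ball_self hε))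
  filter_upwards [h1, hM] with x hx hxM y' hy'
  by_contra hcon
  push Not at hcon
  refine hx y' ⟨abs_le.1 (hxM y' hy'), ?_⟩ hy'
  rw [Set.mem_iUnion₂]
  rintro ⟨y, hy, hb⟩
  rw [Metric.mem_ball, Real.dist_eq] at hb
  exact absurd hb (not_lt.2 (hcon y hy))

open Polynomial in
lemma ps_evalEval_cont (G : ℝ[X][X]) : Continuous (fun p : ℝ × ℝ => evalEval p.1 p.2 G) := by
  induction G using Polynomial.induction_on' with
  | add p q hp hq => simp only [evalEval_add]; exact hp.add hq
  | monomial n a =>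
    have : ∀ x y : ℝ, evalEval x y (monomial n a) = a.eval x * y ^ n := by
      intro x y
      rw [← C_mul_X_pow_eq_monomial, evalEval_mul, evalEval_pow, evalEval_C, evalEval_X]
    simp only [this]
    exact (a.continuous.comp continuous_fst).mul (continuous_snd.pow n)

open Polynomial in
lemma ps_evalEval_deriv (G : ℝ[X][X]) (x y : ℝ) :
    HasDerivAt (fun y => evalEval x y G) (evalEval x y (derivative G)) y := by
  simp only [← map_evalRingHom_eval, ← derivative_map]
  exact Polynomial.hasDerivAt _ _

open Polynomial Filter Topology in
lemma ps_bdd (G : ℝ[X][X]) (x0 : ℝ) (h : G.leadingCoeff.eval x0 ≠ 0) :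
    ∃ M, ∀ᶠ x in 𝓝 x0, ∀ y, evalEval x y G = 0 → |y| ≤ M := by
  have h0 : evalEval x0 0 G.reverse ≠ 0 := by
    rw [evalEval, C_0, ← coeff_zero_eq_eval_zero, coeff_zero_reverse]
    exact h
  have h1 : ∀ᶠ p in 𝓝 (x0, (0:ℝ)), evalEval p.1 p.2 G.reverse ≠ 0 :=
    (ps_evalEval_cont G.reverse).continuousAt.eventually_ne h0
  rw [nhds_prod_eq, Filter.eventually_prod_iff] at h1
  obtain ⟨pa, ha, pb, hb, h⟩ := h1
  obtain ⟨ε, hε, hball⟩ := Metric.eventually_nhds_iff.1 hb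
  refine ⟨1 / ε, ha.mono fun x hx y hy => ?_⟩
  by_contra hcon
  push Not at hcon
  have hypos : 0 < |y| := lt_trans (by positivity) hcon
  have hy0 : y ≠ 0 := abs_pos.1 hypos
  refine h hx (hball (y := y⁻¹) ?_) ?_
  · rw [Real.dist_eq, sub_zero, abs_inv]
    rw [inv_lt_comm₀ hypos hε]
    simpa using hcon
  · let _ : Invertible y := invertibleOfNonzero hy0
    have := (Polynomial.eval₂_reverse_eq_zero_iff (evalRingHom x) y G).2 (by
      rw [eval₂_evalRingHom]; exact hy)
    rw [eval₂_evalRingHom, invOf_eq_inv] at this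
    exact this

open Polynomial in
def psRoots (G : ℝ[X][X]) (x : ℝ) : Finset ℝ := (G.map (evalRingHom x)).roots.toFinset

open Polynomial in
lemma psRoots_mem (G : ℝ[X][X]) (x y : ℝ) (h : G.leadingCoeff.eval x ≠ 0) :
    y ∈ psRoots G x ↔ evalEval x y G = 0 := by
  have h0 : G.map (evalRingHom x) ≠ 0 := by
    intro h1
    apply h
    have := congrArg (fun p => p.coeff G.natDegree) h1
    simpa [coeff_map] using this
  rw [psRoots, Multiset.mem_toFinset, mem_roots h0, IsRoot, map_evalRingHom_eval]

open Polynomial in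
lemma psRoots_card (G : ℝ[X][X]) (x : ℝ) : (psRoots G x).card ≤ G.natDegree :=
  (Multiset.toFinset_card_le _).trans ((card_roots' _).trans natDegree_map_le)

open Polynomial Filter Topology in
lemma ps_local (G : ℝ[X][X]) (x0 : ℝ) (h : G.leadingCoeff.eval x0 ≠ 0)
    (hs : ∀ y, evalEval x0 y G = 0 → evalEval x0 y (derivative G) ≠ 0) :
    (∀ᶠ x in 𝓝 x0, (psRoots G x).card = (psRoots G x0).card) ∧
      ∀ i < (psRoots G x0).card, ContinuousAt (fun x => psNth (psRoots G x) i) x0 := by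
  have hlc : ∀ᶠ x in 𝓝 x0, G.leadingCoeff.eval x ≠ 0 :=
    G.leadingCoeff.continuous.continuousAt.eventually_ne h
  obtain ⟨M, hM⟩ := ps_bdd G x0 h
  apply ps_sel
  · intro ε hε y hy
    rw [psRoots_mem _ _ _ h] at hy
    filter_upwards [hlc, ps_H1 (fun x y => evalEval x y G) (fun x y => evalEval x y (derivative G))
      (ps_evalEval_cont G) (ps_evalEval_deriv G) x0 y hy (hs y hy) ε hε] with x hx h1
    obtain ⟨y', h2, h3⟩ := h1
    exact ⟨y', (psRoots_mem _ _ _ hx).2 h2, h3⟩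
  · intro y hy
    rw [psRoots_mem _ _ _ h] at hy
    obtain ⟨ε, hε, h1⟩ := ps_H2 (fun x y => evalEval x y G)
      (fun x y => evalEval x y (derivative G))
      (ps_evalEval_cont _) (ps_evalEval_deriv G) x0 y (hs y hy)
    refine ⟨ε, hε, ?_⟩
    filter_upwards [hlc, h1] with x hx h1 a ha b hb
    exact h1 a b ((psRoots_mem _ _ _ hx).1 ha) ((psRoots_mem _ _ _ hx).1 hb)
  · intro ε hε
    filter_upwards [hlc, ps_H3 (fun x y => evalEval x y G) (ps_evalEval_cont G) x0 M hM ε hε]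
      with x hx h1 y' hy'
    obtain ⟨y, h2, h3⟩ := h1 y' ((psRoots_mem _ _ _ hx).1 hy')
    exact ⟨y, (psRoots_mem _ _ _ h).2 h2, h3⟩


def psUp (X : Finset ℝ) (l : EReal) : EReal := (X.filter (fun x : ℝ => l < (x : EReal))).inf (fun x : ℝ => (x : EReal))

lemma psUp_lt (X : Finset ℝ) (l : EReal) (x : ℝ) :
    (x : EReal) < psUp X l ↔ ∀ z ∈ X, l < (z : EReal) → x < z := by
  rw [psUp, Finset.lt_inf_iff (EReal.coe_lt_top x)]
  simp only [Finset.mem_filter, and_imp, EReal.coe_lt_coe_iff]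

def psDn (X : Finset ℝ) : Finset EReal := insert ⊥ (X.image (fun x : ℝ => (x : EReal)))

lemma psDn_exists (X : Finset ℝ) (x : ℝ) (hx : x ∉ X) :
    ∃ l ∈ psDn X, l < (x : EReal) ∧ (x : EReal) < psUp X l := by
  by_cases h : (X.filter (fun z => z < x)).Nonempty
  · refine ⟨(((X.filter (fun z => z < x)).max' h : ℝ) : EReal), ?_, ?_, ?_⟩
    · have := Finset.max'_mem _ h
      rw [Finset.mem_filter] at this
      exact Finset.mem_insert_of_mem (Finset.mem_image_of_mem _ this.1)
    · have := Finset.max'_mem _ h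
      rw [Finset.mem_filter] at this
      exact EReal.coe_lt_coe_iff.2 this.2
    · rw [psUp_lt]
      intro z hz hlt
      rw [EReal.coe_lt_coe_iff] at hlt
      by_contra hc
      have hzx : z < x := lt_of_le_of_ne (not_lt.1 hc) (fun h => hx (h ▸ hz))
      have := Finset.le_max' (X.filter (fun z => z < x)) z (Finset.mem_filter.2 ⟨hz, hzx⟩)
      exact absurd hlt (not_lt.2 this)
  · refine ⟨⊥, Finset.mem_insert_self _ _, EReal.bot_lt_coe x, ?_⟩
    rw [psUp_lt]
    intro z hz _
    by_contra hc
    have hzx : z < x := lt_of_le_of_ne (not_lt.1 hc) (fun h => hx (h ▸ hz))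
    exact h ⟨z, Finset.mem_filter.2 ⟨hz, hzx⟩⟩

lemma psDn_le (X : Finset ℝ) (x : ℝ) (l l' : EReal) (hl' : l' ∈ psDn X)
    (h1' : l' < (x : EReal))
    (h2 : (x : EReal) < psUp X l) : l' ≤ l := by
  by_contra hc
  push Not at hc
  rcases Finset.mem_insert.1 hl' with rfl | h
  · exact absurd hc (not_lt.2 bot_le)
  · obtain ⟨z, hz, rfl⟩ := Finset.mem_image.1 h
    have := (psUp_lt X l x).1 h2 z hz hc
    rw [EReal.coe_lt_coe_iff] at h1'
    exact absurd h1' (not_lt.2 this.le)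

open Polynomial in
lemma ps_curve_arcs (E : ℕ) (γ : Set (Fin 2 → ℝ)) (h : IsPlaneAlgCurve E γ) :
    ∃ (X : Finset ℝ) (arc : EReal × ℕ → PSArc) (A : Finset (EReal × ℕ)),
      X.card ≤ 2 * E * E + E ∧
      (∀ x ∈ X, (∀ p : Fin 2 → ℝ, p 0 = x → p ∈ γ) ∨
        ∃ T : Finset ℝ, T.card ≤ E ∧ ∀ p ∈ γ, p 0 = x → p 1 ∈ T) ∧
      A.card ≤ (2 * E * E + E + 1) * E ∧
      (∀ a ∈ A, ∀ x, (arc a).Dom x → ∃ y : ℝ, (arc a).φ x = (y : EReal) ∧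
        ∀ p : Fin 2 → ℝ, p 0 = x → p 1 = y → p ∈ γ) ∧
      (∀ p ∈ γ, p 0 ∉ X → ∃ a ∈ A, PSOn arc a p) ∧
      (∀ a ∈ A, ∀ b ∈ A, ∀ x, (arc a).Dom x → (arc b).Dom x → (arc a).φ x = (arc b).φ x → a = b) := by
  obtain ⟨G, hG, hsq, hd, hc, hγ⟩ := ps_curve_poly E γ h
  obtain ⟨D, hD, hDd, hDx⟩ := ps_disc E G hG hsq hd hc
  let X := D.roots.toFinset
  have hX : ∀ x, x ∉ X → D.eval x ≠ 0 := by
    intro x hx h0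
    exact hx (Multiset.mem_toFinset.2 ((mem_roots hD).2 h0))
  have hXc : X.card ≤ 2 * E * E + E :=
    (Multiset.toFinset_card_le _).trans ((card_roots' _).trans hDd)
  have hnot : ∀ (l : EReal) (x : ℝ), l < x → (x : EReal) < psUp X l → x ∉ X := by
    intro l x h1 h2 hx
    exact lt_irrefl _ ((psUp_lt X l x).1 h2 x hx h1)
  have hconst : ∀ (l : EReal) (x x' : ℝ), l < x → (x : EReal) < psUp X l → l < x' →
      (x' : EReal) < psUp X l → (psRoots G x).card = (psRoots G x').card := by
    intro l x x' h1 h2 h3 h4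
    have hpre : IsPreconnected {z : ℝ | l < z ∧ (z : EReal) < psUp X l} := by
      apply Set.OrdConnected.isPreconnected
      refine ⟨fun a ha b hb z hz => ⟨?_, ?_⟩⟩
      · exact lt_of_lt_of_le ha.1 (EReal.coe_le_coe_iff.2 hz.1)
      · exact lt_of_le_of_lt (EReal.coe_le_coe_iff.2 hz.2) hb.2
    refine hpre.constant (f := fun z => (psRoots G z).card) ?_ ⟨h1, h2⟩ ⟨h3, h4⟩
    intro z hz
    apply ContinuousAt.continuousWithinAt
    obtain ⟨hl, hs⟩ := hDx z (hX z (hnot l z hz.1 hz.2))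
    have := (ps_local G z hl hs).1
    exact continuousAt_const.congr (this.mono fun w hw => hw.symm)
  let arc : EReal × ℕ → PSArc := fun a =>
    if hgood : ∀ x : ℝ, a.1 < x → (x : EReal) < psUp X a.1 → a.2 < (psRoots G x).card then
      { l := a.1, u := psUp X a.1, φ := fun x => ((psNth (psRoots G x) a.2 : ℝ) : EReal),
        cont := by
          intro x h1 h2
          obtain ⟨hl, hs⟩ := hDx x (hX x (hnot a.1 x h1 h2))
          exact continuous_coe_real_ereal.continuousAt.comp
            ((ps_local G x hl hs).2 a.2 (hgood x h1 h2)) }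
    else { l := ⊤, u := ⊥, φ := fun _ => 0,
           cont := by intro x h1; exact absurd h1 (not_lt.2 le_top) }
  have harc : ∀ a x, (arc a).Dom x → a.1 < x ∧ (x : EReal) < psUp X a.1 ∧
      a.2 < (psRoots G x).card ∧ (arc a).φ x = ((psNth (psRoots G x) a.2 : ℝ) : EReal) := by
    intro a x hx
    by_cases hgood : ∀ x : ℝ, a.1 < x → (x : EReal) < psUp X a.1 → a.2 < (psRoots G x).card
    · simp only [arc, dif_pos hgood] at hx ⊢
      exact ⟨hx.1, hx.2, hgood x hx.1 hx.2, trivial⟩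
    · simp only [arc, dif_neg hgood] at hx
      exact absurd hx.1 (not_lt.2 le_top)
  refine ⟨X, arc, psDn X ×ˢ Finset.range E, hXc, ?_, ?_, ?_, ?_, ?_⟩
  · intro x _
    by_cases h0 : G.map (evalRingHom x) = 0
    · left
      rintro p rfl
      rw [hγ, ← map_evalRingHom_eval, h0, eval_zero]
    · right
      refine ⟨psRoots G x, (psRoots_card G x).trans hd, ?_⟩
      rintro p hp rfl
      rw [hγ, ← map_evalRingHom_eval] at hp
      exact Multiset.mem_toFinset.2 ((mem_roots h0).2 hp)
  · rw [Finset.card_product, Finset.card_range]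
    refine Nat.mul_le_mul_right _ ((Finset.card_insert_le _ _).trans ?_)
    exact Nat.succ_le_succ (Finset.card_image_le.trans hXc)
  · intro a _ x hx
    obtain ⟨h1, h2, h3, h4⟩ := harc a x hx
    refine ⟨_, h4, ?_⟩
    rintro p rfl hp
    rw [hγ, hp]
    exact (psRoots_mem G _ _ (hDx _ (hX _ (hnot _ _ h1 h2))).1).1 (psNth_mem _ _ h3)
  · intro p hp hpX
    obtain ⟨l, hl, h1, h2⟩ := psDn_exists X (p 0) hpX
    have hm := (psRoots_mem G _ _ (hDx _ (hX _ hpX)).1).2 ((hγ p).1 hp)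
    obtain ⟨i, hi, hi'⟩ := psNth_surj _ _ hm
    refine ⟨(l, i), Finset.mem_product.2 ⟨hl, Finset.mem_range.2
      (hi.trans_le ((psRoots_card G _).trans hd))⟩, ?_⟩
    have hgood : ∀ x : ℝ, l < x → (x : EReal) < psUp X l → i < (psRoots G x).card := by
      intro x h3 h4
      rw [hconst l x (p 0) h3 h4 h1 h2]
      exact hi
    simp only [PSOn, arc, dif_pos hgood]
    refine ⟨⟨h1, h2⟩, ?_⟩
    rw [hi']
  · intro a ha b hb x hax hbx heq
    obtain ⟨h1, h2, h3, h4⟩ := harc a x hax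
    obtain ⟨k1, k2, k3, k4⟩ := harc b x hbx
    rw [h4, k4, EReal.coe_eq_coe_iff] at heq
    have e2 := psNth_inj _ _ _ h3 k3 heq
    have ha := (Finset.mem_product.1 ha).1
    have hb := (Finset.mem_product.1 hb).1
    exact Prod.ext (le_antisymm (psDn_le X x _ _ ha h1 k2) (psDn_le X x _ _ hb k1 h2)) e2


lemma ps_final_arith (c M m n N α β B : ℝ) (hc : 0 < c) (hM : 1 ≤ M) (hm : 0 ≤ m) (hn : 0 ≤ n)
    (hN0 : 0 ≤ N) (hN : N ≤ M * n) (hβ0 : 0 ≤ β) (hβ1 : β ≤ 1) (hB : 0 ≤ B) (I S : ℝ)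
    (hS : S ≤ c * (m ^ α * N ^ β + m + N)) (hI : I ≤ S + m + B * n) :
    I ≤ (c * M + 1 + B) * (m ^ α * n ^ β + m + n) := by
  have h1 : N ^ β ≤ M * n ^ β := by
    calc N ^ β ≤ (M * n) ^ β := Real.rpow_le_rpow hN0 hN hβ0
      _ = M ^ β * n ^ β := Real.mul_rpow (by linarith) hn
      _ ≤ M ^ (1:ℝ) * n ^ β := by
        gcongr
      _ = M * n ^ β := by rw [Real.rpow_one]
  have hma : 0 ≤ m ^ α := Real.rpow_nonneg hm _
  have hnb : 0 ≤ n ^ β := Real.rpow_nonneg hn _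
  have h2 : m ^ α * N ^ β ≤ M * (m ^ α * n ^ β) := by
    calc m ^ α * N ^ β ≤ m ^ α * (M * n ^ β) := by gcongr
      _ = _ := by ring
  have h3 : m ≤ M * m := by nlinarith
  have h4 : S ≤ c * (M * (m ^ α * n ^ β + m + n)) := by
    refine hS.trans (mul_le_mul_of_nonneg_left ?_ hc.le)
    linarith
  have h5 : 0 ≤ m ^ α * n ^ β := mul_nonneg hma hnb
  have h6 : B * n ≤ B * (m ^ α * n ^ β + m + n) := mul_le_mul_of_nonneg_left (by linarith) hB
  nlinarith

/-- **Pach–Sharir theorem.** For all `k ≥ 2`, `s ≥ 1` and every degree bound `E`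
there is a constant `c` (depending on `k`, `s`, and `E`) such that for every set
`P` of `m` points and every set `C` of `n` algebraic curves of degree at most `E`
in `ℝ²` with `k` degrees of freedom and multiplicity `s`,
`I(P,C) ≤ c (m^{k/(2k-1)} n^{(2k-2)/(2k-1)} + m + n)`. -/
theorem pach_sharir (k s E : ℕ) (hk : 2 ≤ k) (hs : 1 ≤ s) :
    ∃ c : ℝ, 0 < c ∧
      ∀ (P : Finset (Fin 2 → ℝ)) (C : Finset (Set (Fin 2 → ℝ))),
        (∀ γ ∈ C, IsPlaneAlgCurve E γ) →
        HasDegreesOfFreedom C k s →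
        (Incidences P C : ℝ) ≤
          c * ((P.card : ℝ) ^ ((k : ℝ) / (2 * (k : ℝ) - 1))
                  * (C.card : ℝ) ^ ((2 * (k : ℝ) - 2) / (2 * (k : ℝ) - 1))
                + (P.card : ℝ) + (C.card : ℝ)) := by
  obtain ⟨K, rfl⟩ : ∃ K, k = K + 1 := ⟨k - 1, by omega⟩
  obtain ⟨c, hc, hmain⟩ := ps_arcs (ι := Set (Fin 2 → ℝ) × EReal × ℕ) K s
  set B : ℕ := 2 * E * E + E with hB
  set M : ℕ := (B + 1) * E + 1 with hM
  refine ⟨c * M + 1 + ((B * E : ℕ) : ℝ), by positivity, ?_⟩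
  intro P C hC hdof
  have hne : Nonempty (EReal × ℕ → PSArc) :=
    ⟨fun _ => { l := ⊤, u := ⊥, φ := fun _ => 0,
                cont := by intro x h1; exact absurd h1 (not_lt.2 le_top) }⟩
  have hex := fun γ (h : γ ∈ C) => ps_curve_arcs E γ (hC γ h)
  choose! X arc A hXc hXv hAc hAφ hAcov hAuniq using hex
  let F : Set (Fin 2 → ℝ) × EReal × ℕ → PSArc := fun t => arc t.1 t.2
  let AA : Finset (Set (Fin 2 → ℝ) × EReal × ℕ) := C.biUnion fun γ => (A γ).image fun a => (γ, a)
  have hAA : ∀ t, t ∈ AA ↔ t.1 ∈ C ∧ t.2 ∈ A t.1 := by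
    rintro ⟨γ, a⟩
    simp only [AA, Finset.mem_biUnion, Finset.mem_image, Prod.mk.injEq]
    constructor
    · rintro ⟨γ', h1, a', h2, rfl, rfl⟩; exact ⟨h1, h2⟩
    · rintro ⟨h1, h2⟩; exact ⟨γ, h1, a, h2, rfl, rfl⟩
  have hAAcard : AA.card ≤ C.card * ((B + 1) * E) := by
    refine Finset.card_biUnion_le.trans ?_
    refine (Finset.sum_le_card_nsmul _ _ ((B + 1) * E) fun γ hγ => ?_).trans (by simp)
    exact Finset.card_image_le.trans (hAc γ hγ)
  have hon : ∀ t ∈ AA, ∀ p, PSOn F t p → p ∈ t.1 := by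
    intro t ht p hp
    obtain ⟨h1, h2⟩ := (hAA t).1 ht
    obtain ⟨y, hy, hy'⟩ := hAφ t.1 h1 t.2 h2 (p 0) hp.1
    refine hy' p rfl ?_
    have := hy.symm.trans hp.2
    exact (EReal.coe_eq_coe_iff.1 this).symm
  have hS := hmain F P AA
    (by
      intro t ht x hx
      obtain ⟨h1, h2⟩ := (hAA t).1 ht
      obtain ⟨y, hy, -⟩ := hAφ t.1 h1 t.2 h2 x hx
      change (F t).φ x = _ at hy
      rw [hy]
      exact ⟨EReal.coe_ne_bot y, EReal.coe_ne_top y⟩)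
    (by
      intro t ht t' ht' hne
      obtain ⟨h1, h2⟩ := (hAA t).1 ht
      obtain ⟨h1', h2'⟩ := (hAA t').1 ht'
      by_cases he : t.1 = t'.1
      · have hempty : {x : ℝ | (F t).Dom x ∧ (F t').Dom x ∧ (F t).φ x = (F t').φ x} = ∅ := by
          rw [Set.eq_empty_iff_forall_notMem]
          rintro x ⟨k1, k2, k3⟩
          apply hne
          obtain ⟨γ, a⟩ := t
          obtain ⟨γ', a'⟩ := t'
          obtain rfl : γ = γ' := he
          rw [hAuniq γ h1 a h2 a' h2' x k1 k2 k3]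
        rw [hempty]
        exact ⟨Set.finite_empty, by simp⟩
      · obtain ⟨hf, hn⟩ := hdof.2 t.1 h1 t'.1 h1' he
        let g : ℝ → Fin 2 → ℝ := fun x => ![x, ((F t).φ x).toReal]
        have hmaps : Set.MapsTo g {x : ℝ | (F t).Dom x ∧ (F t').Dom x ∧ (F t).φ x = (F t').φ x}
            (t.1 ∩ t'.1) := by
          rintro x ⟨k1, k2, k3⟩
          obtain ⟨y, hy, -⟩ := hAφ t.1 h1 t.2 h2 x k1
          change (F t).φ x = _ at hy
          refine ⟨hon t ht _ ⟨k1, ?_⟩, hon t' ht' _ ⟨k2, ?_⟩⟩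
          · simp [g, hy]
          · rw [hy] at k3
            simp [g, hy, ← k3]
        have hinj : Set.InjOn g {x : ℝ | (F t).Dom x ∧ (F t').Dom x ∧ (F t).φ x = (F t').φ x} := by
          intro x _ x' _ hxx
          simpa [g] using congrFun hxx 0
        exact ⟨Set.Finite.of_injOn hmaps hinj hf,
          (Set.ncard_le_ncard_of_injOn g hmaps hinj hf).trans hn⟩)
    (by
      intro pts hpts
      refine le_trans ?_ (hdof.1 pts hpts)
      refine Finset.card_le_card_of_injOn Prod.fst ?_ ?_
      · intro t ht
        obtain ⟨ht1, ht2⟩ := Finset.mem_filter.1 ht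
        exact Finset.mem_filter.2 ⟨((hAA t).1 ht1).1, fun p hp => hon t ht1 p (ht2 p hp)⟩
      · intro t ht t' ht' he
        obtain ⟨ht1, ht2⟩ := Finset.mem_filter.1 ht
        obtain ⟨ht1', ht2'⟩ := Finset.mem_filter.1 ht'
        obtain ⟨p, hp⟩ : pts.Nonempty := by rw [← Finset.card_pos]; omega
        obtain ⟨h1, h2⟩ := (hAA t).1 ht1
        obtain ⟨h1', h2'⟩ := (hAA t').1 ht1'
        have k1 := ht2 p hp
        have k2 := ht2' p hp
        obtain ⟨γ, a⟩ := t
        obtain ⟨γ', a'⟩ := t'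
        obtain rfl : γ = γ' := he
        rw [hAuniq γ h1 a h2 a' h2' (p 0) k1.1 k2.1 (k1.2.trans k2.2.symm)])
  let V : (Fin 2 → ℝ) → Set (Fin 2 → ℝ) → Prop := fun p γ => ∀ q : Fin 2 → ℝ, q 0 = p 0 → q ∈ γ
  have hV : ∑ γ ∈ C, (P.filter (fun p => V p γ)).card ≤ P.card := by
    have h1 := Finset.sum_card_bipartiteAbove_eq_sum_card_bipartiteBelow (s := P) (t := C) V
    rw [Finset.card_eq_sum_ones P]
    refine (le_of_eq h1.symm).trans (Finset.sum_le_sum fun p _ => ?_)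
    rw [Finset.card_le_one]
    intro γ hγ γ' hγ'
    obtain ⟨a1, a2⟩ := Finset.mem_filter.1 hγ
    obtain ⟨b1, b2⟩ := Finset.mem_filter.1 hγ'
    by_contra hne
    have hf := (hdof.2 γ a1 γ' b1 hne).1
    have hinf : (Set.range fun y : ℝ => (![p 0, y] : Fin 2 → ℝ)).Infinite := by
      apply Set.infinite_range_of_injective
      intro y y' h
      simpa using congrFun h 1
    refine hinf (hf.subset ?_)
    rintro _ ⟨y, rfl⟩
    exact ⟨a2 _ (by simp), b2 _ (by simp)⟩
  have hone : ∀ γ ∈ C, (P.filter (fun p => p ∈ γ)).card ≤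
      ∑ a ∈ A γ, (P.filter (PSOn F (γ, a))).card + (P.filter (fun p => V p γ)).card + B * E := by
    intro γ hγ
    have hT : ∀ x, ∃ T : Finset ℝ, T.card ≤ E ∧ (x ∈ X γ →
        (∀ p : Fin 2 → ℝ, p 0 = x → p ∈ γ) ∨ ∀ p ∈ γ, p 0 = x → p 1 ∈ T) := by
      intro x
      by_cases hx : x ∈ X γ
      · rcases hXv γ hγ x hx with h | ⟨T, h1, h2⟩
        · exact ⟨∅, by simp, fun _ => Or.inl h⟩
        · exact ⟨T, h1, fun _ => Or.inr h2⟩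
      · exact ⟨∅, by simp, fun h => absurd h hx⟩
    choose T hTc hT using hT
    have hsub : P.filter (fun p => p ∈ γ) ⊆
        ((A γ).biUnion fun a => P.filter (PSOn F (γ, a))) ∪ P.filter (fun p => V p γ) ∪
          (X γ).biUnion fun x => (T x).image fun y => (![x, y] : Fin 2 → ℝ) := by
      intro p hp
      obtain ⟨hpP, hpγ⟩ := Finset.mem_filter.1 hp
      rw [Finset.mem_union, Finset.mem_union]
      by_cases hx : p 0 ∈ X γ
      · rcases hT (p 0) hx with h | h
        · left; right
          exact Finset.mem_filter.2 ⟨hpP, h⟩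
        · right
          refine Finset.mem_biUnion.2 ⟨p 0, hx, Finset.mem_image.2 ⟨p 1, h p hpγ rfl, ?_⟩⟩
          ext i; fin_cases i <;> rfl
      · left; left
        obtain ⟨a, ha, hap⟩ := hAcov γ hγ p hpγ hx
        exact Finset.mem_biUnion.2 ⟨a, ha, Finset.mem_filter.2 ⟨hpP, hap⟩⟩
    refine (Finset.card_le_card hsub).trans ?_
    refine (Finset.card_union_le _ _).trans (add_le_add ?_ ?_)
    · exact (Finset.card_union_le _ _).trans (add_le_add Finset.card_biUnion_le le_rfl)
    · refine Finset.card_biUnion_le.trans ?_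
      refine (Finset.sum_le_card_nsmul _ _ E fun x _ => Finset.card_image_le.trans (hTc x)).trans ?_
      rw [smul_eq_mul]
      exact Nat.mul_le_mul_right _ (hXc γ hγ)
  have hInc : Incidences P C = ∑ γ ∈ C, (P.filter (fun p => p ∈ γ)).card := by
    unfold Incidences
    simp only [Finset.card_filter]
    rw [Finset.sum_product_right]
  have hI : Incidences P C ≤ ∑ t ∈ AA, (P.filter (PSOn F t)).card + P.card + B * E * C.card := by
    rw [hInc, Finset.sum_finset_product AA C A hAA]
    refine (Finset.sum_le_sum hone).trans ?_
    rw [Finset.sum_add_distrib, Finset.sum_add_distrib, Finset.sum_const, smul_eq_mul]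
    have := hV
    rw [mul_comm C.card]
    omega
  have hI' : (Incidences P C : ℝ) ≤ (∑ t ∈ AA, ((P.filter (PSOn F t)).card : ℝ)) + (P.card : ℝ) +
      ((B * E : ℕ) : ℝ) * (C.card : ℝ) := by exact_mod_cast hI
  have e1 : (((K + 1 : ℕ) : ℝ)) / (2 * ((K + 1 : ℕ) : ℝ) - 1) = ((K:ℝ) + 1) / (2 * K + 1) := by
    push_cast; congr 1; ring
  have e2 : (2 * ((K + 1 : ℕ) : ℝ) - 2) / (2 * ((K + 1 : ℕ) : ℝ) - 1) = (2 * K : ℝ) / (2 * K + 1) := by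
    push_cast; congr 1 <;> ring
  rw [e1, e2]
  refine ps_final_arith c M P.card C.card AA.card _ _ _ hc (by rw [hM]; push_cast; nlinarith [show (0:ℝ) ≤ ((B:ℝ) + 1) * E by positivity])
    (by positivity) (by positivity) (by positivity) ?_ (by positivity) ?_ (by positivity) _ _ hS hI'
  · have h7 : AA.card ≤ M * C.card := by
      refine hAAcard.trans ?_
      rw [mul_comm, hM]
      exact Nat.mul_le_mul_right _ (Nat.le_succ _)
    exact_mod_cast h7
  · rw [div_le_one (by positivity)]; linarith
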